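/- arXiv:math/0202076 — 5 statements merged into one kernel-verified Lean document; each statement's English description precedes it below -/
import Mathlib

section
/- Let m ≥ n ≥ 1 and let κ₁ ≥ κ₂ ≥ 0 be integers. Let λ be a partition of length at most m+n. If the Littlewood–Richardson coefficient c^λ_{κ₁·1^m, κ₂·1^n} is nonzero, then λ_j + λ_{m+n+1−j} = κ₁ + κ₂ for every j = 1,…,n; λ_{n+j} = κ₁ for every j = 1,…,m−n; and λ_n ≥ κ₁. -/
/-- A partition of length at most `r`, presented as a function on positive
indices: weakly decreasing on indices `≥ 1` and vanishing beyond `r`. -/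
def IsPartitionOfLength (r : ℕ) (lam : ℕ → ℕ) : Prop :=
  (∀ i, 1 ≤ i → lam (i + 1) ≤ lam i) ∧ ∀ i, r < i → lam i = 0

/-- The partition `a·1^k`: first `k` parts equal to `a`, the rest `0`. -/
def onesPart (a k : ℕ) : ℕ → ℕ := fun i => if 1 ≤ i ∧ i ≤ k then a else 0

/-- The box `(i, j)` (row `i ≥ 1`, column `j`) lies in the skew shape `λ ∖ μ`. -/
def InShape (lam mu : ℕ → ℕ) (p : ℕ × ℕ) : Prop :=
  1 ≤ p.1 ∧ mu p.1 < p.2 ∧ p.2 ≤ lam p.1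

/-- The set of boxes read before (and including) position `(i, j)` in the
reading word: boxes in rows above `i`, together with boxes of row `i` in
columns `≥ j` (the reading goes right to left along rows, top row first). -/
def ReadingPrefix (lam mu : ℕ → ℕ) (i j : ℕ) : Set (ℕ × ℕ) :=
  {p | InShape lam mu p ∧ (p.1 < i ∨ (p.1 = i ∧ j ≤ p.2))}

/-- A Littlewood–Richardson tableau of shape `λ ∖ μ` and weight `ν` with
symbols `1, …, s`: a filling of the boxes of `λ ∖ μ` (extended by `0` outside
of the shape) which is weakly increasing along rows, strictly increasing down
columns, uses the symbol `k` exactly `ν k` times, and whose reading word is a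
lattice permutation. -/
def IsLRTableau (lam mu nu : ℕ → ℕ) (s : ℕ) (T : ℕ × ℕ → ℕ) : Prop :=
  (∀ p, InShape lam mu p → 1 ≤ T p ∧ T p ≤ s) ∧
  (∀ p, ¬ InShape lam mu p → T p = 0) ∧
  (∀ i j, InShape lam mu (i, j) → InShape lam mu (i, j + 1) →
    T (i, j) ≤ T (i, j + 1)) ∧
  (∀ i j, InShape lam mu (i, j) → InShape lam mu (i + 1, j) →
    T (i, j) < T (i + 1, j)) ∧
  (∀ k, 1 ≤ k → k ≤ s → {p | InShape lam mu p ∧ T p = k}.ncard = nu k) ∧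
  (∀ i j k, 1 ≤ k →
    {p | p ∈ ReadingPrefix lam mu i j ∧ T p = k + 1}.ncard ≤
      {p | p ∈ ReadingPrefix lam mu i j ∧ T p = k}.ncard)

-- The Littlewood–Richardson coefficient `c^λ_{μν}` (with `ν` regarded as
-- having `s` parts): the number of Littlewood–Richardson tableaux of shape
-- `λ ∖ μ` and weight `ν`, and `0` unless `μ ⊆ λ`.
open Classical in
noncomputable def LRCoeff (lam mu nu : ℕ → ℕ) (s : ℕ) : ℕ :=
  if ∀ i, mu i ≤ lam i then {T : ℕ × ℕ → ℕ | IsLRTableau lam mu nu s T}.ncard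
  else 0

/-- If `m ≥ n ≥ 1`, `κ₁ ≥ κ₂ ≥ 0` and the Littlewood–Richardson coefficient
`c^λ_{κ₁·1^m, κ₂·1^n}` is nonzero, then `λ_j + λ_{m+n+1−j} = κ₁ + κ₂` for
`j = 1, …, n`, `λ_{n+j} = κ₁` for `j = 1, …, m−n`, and `λ_n ≥ κ₁`. -/
theorem lr_nonzero_implies_shape (m n κ₁ κ₂ : ℕ) (hn : 1 ≤ n) (hmn : n ≤ m)
    (hκ : κ₂ ≤ κ₁) (lam : ℕ → ℕ) (hlam : IsPartitionOfLength (m + n) lam)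
    (hne : LRCoeff lam (onesPart κ₁ m) (onesPart κ₂ n) n ≠ 0) :
    (∀ j, 1 ≤ j → j ≤ n → lam j + lam (m + n + 1 - j) = κ₁ + κ₂) ∧
    (∀ j, 1 ≤ j → j ≤ m - n → lam (n + j) = κ₁) ∧
    κ₁ ≤ lam n := by
  unfold LRCoeff at hne
  split_ifs at hne with hsub
  swap
  · exact absurd rfl hne
  obtain ⟨T, hT⟩ := Set.nonempty_of_ncard_ne_zero hne
  obtain ⟨hrange, -, hrow, hcol, hwt, hlat⟩ := hT
  obtain ⟨hdec, hzero⟩ := hlam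
  have hmuup : ∀ i, 1 ≤ i → i ≤ m → onesPart κ₁ m i = κ₁ := by
    intro i h1 h2; simp [onesPart, h1, h2]
  have hmulo : ∀ i, m < i → onesPart κ₁ m i = 0 := by
    intro i h1; simp only [onesPart]; rw [if_neg]; omega
  have hmule : ∀ i, onesPart κ₁ m i ≤ κ₁ := by
    intro i; simp only [onesPart]; split_ifs <;> omega
  have hup : ∀ i, 1 ≤ i → i ≤ m → κ₁ ≤ lam i := by
    intro i h1 h2; have := hsub i; rwa [hmuup i h1 h2] at this
  have hanti : ∀ a b, 1 ≤ a → a ≤ b → lam b ≤ lam a := by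
    intro a b h1 hab
    induction b, hab using Nat.le_induction with
    | base => exact le_rfl
    | succ b hb ih => exact (hdec b (by omega)).trans ih
  set S := InShape lam (onesPart κ₁ m) with hS
  have hSdef : ∀ i j, S (i, j) ↔ 1 ≤ i ∧ onesPart κ₁ m i < j ∧ j ≤ lam i := by
    intro i j; rfl
  have hSup : ∀ i j, i ≤ m → (S (i, j) ↔ 1 ≤ i ∧ κ₁ < j ∧ j ≤ lam i) := by
    intro i j h
    rw [hSdef]
    constructor
    · rintro ⟨h1, h2, h3⟩; rw [hmuup i h1 h] at h2; exact ⟨h1, h2, h3⟩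
    · rintro ⟨h1, h2, h3⟩; rw [hmuup i h1 h]; exact ⟨h1, h2, h3⟩
  have hSlo : ∀ i j, m < i → (S (i, j) ↔ 0 < j ∧ j ≤ lam i) := by
    intro i j h
    rw [hSdef, hmulo i h]
    constructor
    · rintro ⟨h1, h2, h3⟩; exact ⟨h2, h3⟩
    · rintro ⟨h2, h3⟩; exact ⟨by omega, h2, h3⟩
  have hfin : {p | S p}.Finite := by
    apply ((Set.finite_Iic (m + n)).prod (Set.finite_Iic (lam 1))).subset
    rintro ⟨i, j⟩ h
    obtain ⟨h1, h2, h3⟩ := (hSdef i j).1 h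
    refine ⟨?_, ?_⟩
    · by_contra hc
      have := hzero i (by simpa using hc)
      omega
    · exact h3.trans (hanti 1 i le_rfl h1)
  have hrowm : ∀ i a b, a ≤ b → S (i, a) → S (i, b) → T (i, a) ≤ T (i, b) := by
    intro i a b hab ha
    induction b, hab using Nat.le_induction with
    | base => intro _; exact le_rfl
    | succ b hb ih =>
      intro h
      have ha' := (hSdef _ _).1 ha
      have h' := (hSdef _ _).1 h
      have hb' : S (i, b) := (hSdef _ _).2 ⟨h'.1, by omega, by omega⟩
      exact (ih hb').trans (hrow i b hb' h)
  have hge : ∀ i j, κ₁ < j → S (i, j) → i ≤ T (i, j) := by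
    intro i j hj
    induction i with
    | zero => intro _; omega
    | succ i ih =>
      intro h
      rcases Nat.eq_zero_or_pos i with rfl | hi
      · exact (hrange _ h).1
      · have h' := (hSdef _ _).1 h
        have := hmule i
        have := hdec i hi
        have hi' : S (i, j) := (hSdef _ _).2 ⟨hi, by omega, by omega⟩
        have := hcol i j hi' h
        have := ih hi'
        omega
  have hlocol : ∀ i j, m < i → S (i, j) → j ≤ κ₁ := by
    intro i j hi h
    by_contra hc
    have := hge i j (by omega) h
    have := (hrange _ h).2
    omega
  have hle : ∀ i, i ≤ m → ∀ j, S (i, j) → T (i, j) ≤ i := by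
    intro i
    induction i using Nat.strong_induction_on with
    | _ i ih =>
      intro him j h
      have h' := (hSup i j him).1 h
      have hl : S (i, lam i) := (hSup i _ him).2 ⟨h'.1, by omega, le_rfl⟩
      refine (hrowm i j _ h'.2.2 h hl).trans ?_
      by_contra hc
      push Not at hc
      obtain ⟨k, hk⟩ : ∃ k, T (i, lam i) = k + 1 := ⟨T (i, lam i) - 1, by omega⟩
      have hlt := hlat i (lam i) k (by omega)
      have h0 : {p | p ∈ ReadingPrefix lam (onesPart κ₁ m) i (lam i) ∧ T p = k} = ∅ := by
        ext ⟨r, c⟩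
        simp only [Set.mem_setOf_eq, Set.mem_empty_iff_false, iff_false]
        rintro ⟨⟨hs, hrc⟩, hTk⟩
        change r < i ∨ (r = i ∧ lam i ≤ c) at hrc
        rcases hrc with hr | ⟨rfl, hcc⟩
        · have := ih r hr (by omega) c hs
          omega
        · have := ((hSdef _ _).1 hs).2.2
          have hce : c = lam r := by omega
          subst hce
          omega
      rw [h0, Set.ncard_empty, Nat.le_zero, Set.ncard_eq_zero
        (hfin.subset (fun p hp => hp.1.1))] at hlt
      have : (i, lam i) ∈ ({p | p ∈ ReadingPrefix lam (onesPart κ₁ m) i (lam i) ∧ T p = k + 1} : Set (ℕ × ℕ)) :=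
        ⟨⟨hl, Or.inr ⟨rfl, le_rfl⟩⟩, hk⟩
      rw [hlt] at this
      exact this
  have heq : ∀ i j, i ≤ m → S (i, j) → T (i, j) = i := by
    intro i j hi h
    exact le_antisymm (hle i hi j h) (hge i j ((hSup i j hi).1 h).2.1 h)
  -- suffix condition
  have hsuf : ∀ i j k, 1 ≤ k → k + 1 ≤ n →
      {p : ℕ × ℕ | (S p ∧ T p = k) ∧ (i < p.1 ∨ (p.1 = i ∧ p.2 ≤ j))}.ncard ≤
      {p : ℕ × ℕ | (S p ∧ T p = k + 1) ∧ (i < p.1 ∨ (p.1 = i ∧ p.2 ≤ j))}.ncard := by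
    intro i j k hk hkn
    have key : ∀ k, 1 ≤ k → k ≤ n →
        {p : ℕ × ℕ | (S p ∧ T p = k) ∧ (i < p.1 ∨ (p.1 = i ∧ p.2 ≤ j))}.ncard +
        {p | p ∈ ReadingPrefix lam (onesPart κ₁ m) i (j + 1) ∧ T p = k}.ncard = κ₂ := by
      intro k hk hkn
      have hw := hwt k hk hkn
      have : onesPart κ₂ n k = κ₂ := by simp [onesPart, hk, hkn]
      rw [this] at hw
      rw [← hw, ← Set.ncard_union_eq (hs := (hfin.subset (fun p hp => hp.1.1))) (ht := (hfin.subset (fun p hp => hp.1.1)))]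
      · congr 1
        ext ⟨r, c⟩
        simp only [Set.mem_union, Set.mem_setOf_eq, ReadingPrefix, ← hS]
        constructor
        · rintro (h | h)
          · exact h.1
          · exact ⟨h.1.1, h.2⟩
        · intro h
          by_cases hc : i < r ∨ (r = i ∧ c ≤ j)
          · exact Or.inl ⟨h, hc⟩
          · exact Or.inr ⟨⟨h.1, by omega⟩, h.2⟩
      · rw [Set.disjoint_left]
        rintro ⟨r, c⟩ ⟨_, h1⟩ ⟨⟨_, h2⟩, _⟩
        simp only at h1 h2
        omega
    have e1 := key k hk (by omega)
    have e2 := key (k + 1) (by omega) hkn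
    have := hlat i (j + 1) k hk
    omega
  have hP : ∀ d i, m + n - i = d → m < i → ∀ j, S (i, j) → T (i, j) < n →
      S (i + 1, j) ∧ T (i + 1, j) = T (i, j) + 1 := by
    intro d
    induction d using Nat.strong_induction_on with
    | _ d ihd =>
      intro i hid hi j
      induction j using Nat.strong_induction_on with
      | _ j ihj =>
        intro hs hTn
        by_contra hbad
        have ihrow : ∀ r, i < r → ∀ c, S (r, c) → T (r, c) < n →
            S (r + 1, c) ∧ T (r + 1, c) = T (r, c) + 1 := by
          intro r hr c hrc
          have hr2 : r ≤ m + n := by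
            by_contra hc
            have := hzero r (by omega)
            have := (hSdef _ _).1 hrc
            omega
          exact ihd (m + n - r) (by omega) r rfl (by omega) c hrc
        obtain ⟨k, hk⟩ : ∃ k, T (i, j) = k := ⟨_, rfl⟩
        have hk1 := (hrange _ hs).1
        have hsf := hsuf i j k (by omega) (by omega)
        set A := {p : ℕ × ℕ | (S p ∧ T p = k) ∧ (i < p.1 ∨ (p.1 = i ∧ p.2 ≤ j))} with hA
        set B := {p : ℕ × ℕ | (S p ∧ T p = k + 1) ∧ (i < p.1 ∨ (p.1 = i ∧ p.2 ≤ j))} with hB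
        have hAfin : A.Finite := hfin.subset (fun p hp => hp.1.1)
        have hmem : (i, j) ∈ A := ⟨⟨hs, hk⟩, Or.inr ⟨rfl, le_rfl⟩⟩
        have hrB : ∀ r c, (r, c) ∈ B → i < r := by
          rintro r c ⟨⟨h1, h2⟩, h3⟩
          change i < r ∨ (r = i ∧ c ≤ j) at h3
          rcases h3 with h3 | ⟨rfl, h3⟩
          · exact h3
          · have := hrowm _ _ _ h3 h1 hs
            omega
        have hinj : B.ncard ≤ (A \ {(i, j)}).ncard := by
          apply Set.ncard_le_ncard_of_injOn (fun p : ℕ × ℕ => (p.1 - 1, p.2)) (ht := hAfin.subset Set.diff_subset)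
          · rintro ⟨r, c⟩ hrc
            have hir := hrB r c hrc
            obtain ⟨⟨h1, h2⟩, -⟩ := hrc
            obtain ⟨q, rfl⟩ : ∃ q, r = q + 1 := ⟨r - 1, by omega⟩
            have h1' := (hSlo _ _ (by omega)).1 h1
            have hq : S (q, c) := (hSlo _ _ (by omega)).2
              ⟨h1'.1, h1'.2.trans (hdec q (by omega))⟩
            have hlt := hcol q c hq h1
            have hn1 := (hrange _ h1).2
            simp only [Nat.add_sub_cancel]
            rcases Nat.lt_or_ge i q with hiq | hiq
            · have := (ihrow q hiq c hq (by omega)).2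
              refine ⟨⟨⟨hq, by omega⟩, Or.inl hiq⟩, ?_⟩
              simp only [Set.mem_singleton_iff, Prod.mk.injEq]
              omega
            · have hqi : q = i := by omega
              subst hqi
              rcases Nat.lt_or_ge c j with hcj | hcj
              · have := (ihj c hcj hq (by omega)).2
                refine ⟨⟨⟨hq, by omega⟩, Or.inr ⟨rfl, hcj.le⟩⟩, ?_⟩
                simp only [Set.mem_singleton_iff, Prod.mk.injEq]
                omega
              · exfalso
                apply hbad
                have hs' := (hSlo _ _ (by omega)).1 hs
                have hb : S (q + 1, j) := (hSlo _ _ (by omega)).2 ⟨hs'.1, by omega⟩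
                have t1 := hrowm _ _ _ hcj hb h1
                have t2 := hcol _ _ hs hb
                exact ⟨hb, by omega⟩
          · rintro ⟨r, c⟩ h ⟨r', c'⟩ h' he
            have := hrB r c h
            have := hrB r' c' h'
            simp only [Prod.mk.injEq] at he ⊢
            omega
        have := Set.ncard_diff_singleton_add_one hmem hAfin
        omega
  have hiter : ∀ d r c, m < r → S (r, c) → T (r, c) + d ≤ n →
      S (r + d, c) ∧ T (r + d, c) = T (r, c) + d := by
    intro d r c hr hs
    induction d with
    | zero => intro _; exact ⟨hs, rfl⟩
    | succ d ih =>
      intro h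
      obtain ⟨a, b⟩ := ih (by omega)
      have := hP _ (r + d) rfl (by omega) c a (by omega)
      refine ⟨this.1, ?_⟩
      have h2 := this.2
      rw [← add_assoc, h2, b, add_assoc]
  have hstrict : ∀ d r c, m < r → S (r, c) → S (r + d, c) → T (r, c) + d ≤ T (r + d, c) := by
    intro d r c hr hs
    induction d with
    | zero => intro _; exact le_rfl
    | succ d ih =>
      intro h
      have h' := (hSlo _ _ (by omega)).1 h
      have hd := hdec (r + d) (by omega)
      have hx : S (r + d, c) := (hSlo _ _ (by omega)).2 ⟨h'.1, h'.2.trans hd⟩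
      have := ih hx
      have h3 := hcol _ _ hx h
      rw [← add_assoc r d 1]
      omega
  have hlowcount : ∀ k, 1 ≤ k → k ≤ n →
      {p : ℕ × ℕ | (S p ∧ T p = k) ∧ m < p.1}.ncard = lam (m + n + 1 - k) := by
    intro k hk hkn
    have himg : Prod.snd '' {p : ℕ × ℕ | (S p ∧ T p = k) ∧ m < p.1}
        = ((Finset.Icc 1 (lam (m + n + 1 - k)) : Finset ℕ) : Set ℕ) := by
      ext c
      simp only [Set.mem_image, Finset.coe_Icc, Set.mem_Icc]
      constructor
      · rintro ⟨⟨r, c'⟩, ⟨⟨hs, ht⟩, hr⟩, rfl⟩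
        simp only at hr ⊢
        obtain ⟨a, b⟩ := hiter (n - k) r c' hr hs (by omega)
        have a' := (hSlo _ _ (by omega)).1 a
        exact ⟨a'.1, a'.2.trans (hanti _ _ (by omega) (by omega))⟩
      · rintro ⟨h1, h2⟩
        have hb : S (m + 1 + (n - k), c) := (hSlo _ _ (by omega)).2
          ⟨h1, h2.trans (hanti _ _ (by omega) (by omega))⟩
        have ht : S (m + 1, c) := (hSlo _ _ (by omega)).2
          ⟨h1, h2.trans (hanti _ _ (by omega) (by omega))⟩
        have h3 := hstrict _ _ _ (by omega) ht hb
        have h4 := (hrange _ hb).2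
        obtain ⟨a, b⟩ := hiter (k - T (m + 1, c)) (m + 1) c (by omega) ht (by omega)
        exact ⟨(_, c), ⟨⟨a, by omega⟩, by simp only; omega⟩, rfl⟩
    rw [← Set.ncard_image_of_injOn (f := Prod.snd), himg, Set.ncard_coe_finset]
    · simp
    · rintro ⟨r, c⟩ ⟨⟨h1, h2⟩, h3⟩ ⟨r', c'⟩ ⟨⟨h1', h2'⟩, h3'⟩ hcc
      simp only at hcc h3 h3'
      subst hcc
      simp only [Prod.mk.injEq, and_true]
      by_contra hne
      rcases Nat.lt_or_gt_of_ne hne with hlt | hlt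
      · obtain ⟨d, rfl⟩ := Nat.exists_eq_add_of_lt hlt
        have := hstrict (d + 1) r c h3 h1 h1'
        simp only [← add_assoc] at this
        omega
      · obtain ⟨d, rfl⟩ := Nat.exists_eq_add_of_lt hlt
        have := hstrict (d + 1) r' c h3' h1' h1
        simp only [← add_assoc] at this
        omega
  have hupcount : ∀ k, 1 ≤ k → k ≤ n →
      {p : ℕ × ℕ | (S p ∧ T p = k) ∧ p.1 ≤ m}.ncard = lam k - κ₁ := by
    intro k hk hkn
    have : {p : ℕ × ℕ | (S p ∧ T p = k) ∧ p.1 ≤ m}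
        = ((({k} : Finset ℕ) ×ˢ Finset.Ioc κ₁ (lam k) : Finset (ℕ × ℕ)) : Set (ℕ × ℕ)) := by
      ext ⟨r, c⟩
      simp only [Set.mem_setOf_eq, Finset.mem_coe, Finset.mem_product, Finset.mem_singleton, Finset.mem_Ioc]
      constructor
      · rintro ⟨⟨h1, h2⟩, h3⟩
        have := heq r c h3 h1
        have hrk : r = k := by omega
        subst hrk
        exact ⟨rfl, ((hSup _ _ h3).1 h1).2⟩
      · rintro ⟨rfl, h⟩
        have hs := (hSup r c (by omega)).2 ⟨hk, h⟩
        exact ⟨⟨hs, heq _ _ (by omega) hs⟩, by omega⟩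
    rw [this, Set.ncard_coe_finset]
    simp
  refine ⟨?_, ?_, hup n hn hmn⟩
  · intro k hk hkn
    have hw := hwt k hk hkn
    have h1 : onesPart κ₂ n k = κ₂ := by simp [onesPart, hk, hkn]
    have h2 : {p | S p ∧ T p = k} = {p : ℕ × ℕ | (S p ∧ T p = k) ∧ m < p.1} ∪
        {p : ℕ × ℕ | (S p ∧ T p = k) ∧ p.1 ≤ m} := by
      ext p
      simp only [Set.mem_union, Set.mem_setOf_eq]
      have := Nat.lt_or_ge m p.1
      tauto
    rw [h1, h2, Set.ncard_union_eq (hs := (hfin.subset (fun p hp => hp.1.1))) (ht := (hfin.subset (fun p hp => hp.1.1))), hlowcount k hk hkn, hupcount k hk hkn] at hw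
    · have := hup k hk (by omega)
      omega
    · rw [Set.disjoint_left]
      rintro p ⟨_, h⟩ ⟨_, h'⟩
      omega
  · intro j hj hjm
    have h1 := hup (n + j) (by omega) (by omega)
    by_contra hne
    have hs : S (n + j, lam (n + j)) := (hSup _ _ (by omega)).2 ⟨by omega, by omega, le_rfl⟩
    have h2 := heq _ _ (by omega) hs
    have h3 := (hrange _ hs).2
    omega
end

section
/- Let m ≥ n ≥ 1 and let κ₁ ≥ κ₂ ≥ 0 be integers. Let λ be a partition of length at most m+n satisfying: λ_j + λ_{m+n+1−j} = κ₁ + κ₂ for j = 1,…,n; λ_{n+j} = κ₁ for j = 1,…,m−n; and λ_n ≥ κ₁. Then the Littlewood–Richardson coefficient c^λ_{κ₁·1^m, κ₂·1^n} equals 1. -/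
/-- The shape described through a function `D` giving column offsets. -/
def ShapeD (m n κ₁ κ₂ : ℕ) (D : ℕ → ℕ) (i j : ℕ) : Prop :=
  (1 ≤ i ∧ i ≤ n ∧ κ₁ < j ∧ j ≤ κ₁ + κ₂ ∧ i ≤ D (κ₁ + κ₂ + 1 - j)) ∨
  (m < i ∧ 1 ≤ j ∧ i - m + D j ≤ n)

open Classical in
/-- The canonical tableau. -/
noncomputable def canonT (lam mu : ℕ → ℕ) (m : ℕ) (D : ℕ → ℕ) (p : ℕ × ℕ) : ℕ :=
  if InShape lam mu p then (if p.1 ≤ m then p.1 else p.1 - m + D p.2) else 0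

lemma shape_finite (m n κ₁ κ₂ : ℕ) (D : ℕ → ℕ) (lam mu : ℕ → ℕ)
    (hD2 : ∀ j, κ₂ < j → D j = n)
    (hS : ∀ i j, InShape lam mu (i, j) ↔ ShapeD m n κ₁ κ₂ D i j) :
    {p | InShape lam mu p}.Finite := by
  apply Set.Finite.subset ((Set.finite_Iic (m + n)).prod (Set.finite_Iic (κ₁ + κ₂)))
  rintro ⟨i, j⟩ h
  have h := (hS i j).1 h
  have := hD2 j
  simp only [Set.mem_prod, Set.mem_Iic]
  unfold ShapeD at h
  by_cases h2 : κ₂ < j <;> grind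

lemma canon_isLR (m n κ₁ κ₂ : ℕ) (hmn : n ≤ m) (hκ : κ₂ ≤ κ₁) (D : ℕ → ℕ) (lam mu : ℕ → ℕ)
    (hD1 : ∀ j, D j ≤ n) (hD2 : ∀ j, κ₂ < j → D j = n) (hDm : Monotone D)
    (hS : ∀ i j, InShape lam mu (i, j) ↔ ShapeD m n κ₁ κ₂ D i j) :
    IsLRTableau lam mu (onesPart κ₂ n) n (canonT lam mu m D) := by
  have hfin := shape_finite m n κ₁ κ₂ D lam mu hD2 hS
  have hT : ∀ i j, InShape lam mu (i, j) →
      canonT lam mu m D (i, j) = if i ≤ m then i else i - m + D j := by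
    intro i j h; simp [canonT, h]
  refine ⟨?_, ?_, ?_, ?_, ?_, ?_⟩
  · rintro ⟨i, j⟩ h
    rw [hT i j h]
    have := (hS i j).1 h
    unfold ShapeD at this
    split_ifs <;> omega
  · intro p h; simp [canonT, h]
  · intro i j h h'
    rw [hT i j h, hT _ _ h']
    have := hDm (Nat.le_succ j)
    split_ifs <;> simp at * <;> omega
  · intro i j h h'
    rw [hT i j h, hT _ _ h']
    have h1 := (hS _ _).1 h
    have h2 := (hS _ _).1 h'
    unfold ShapeD at h1 h2
    have hj2 := hD2 j
    split_ifs <;> omega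
  · intro k hk1 hkn
    have : {p | InShape lam mu p ∧ canonT lam mu m D p = k} =
        (fun j => if k ≤ D j then (k, κ₁ + κ₂ + 1 - j) else (m + k - D j, j)) ''
          (Set.Icc 1 κ₂) := by
      ext ⟨i, j⟩
      simp only [Set.mem_setOf_eq, Set.mem_image, Set.mem_Icc]
      constructor
      · rintro ⟨h, h'⟩
        rw [hT i j h] at h'
        have h1 := (hS _ _).1 h
        unfold ShapeD at h1
        rcases h1 with h1 | h1
        · refine ⟨κ₁ + κ₂ + 1 - j, by omega, ?_⟩
          rw [if_pos (by omega)] at h'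
          rw [if_pos (by omega)]
          ext <;> simp <;> omega
        · have := hD2 j
          refine ⟨j, by omega, ?_⟩
          rw [if_neg (by omega)] at h'
          rw [if_neg (by omega)]
          ext <;> simp <;> omega
      · rintro ⟨c, hc, h⟩
        split_ifs at h with hc'
        · simp only [Prod.mk.injEq] at h
          have hj : κ₁ + κ₂ + 1 - j = c := by omega
          have hs : InShape lam mu (i, j) := by
            rw [hS]; left; rw [hj]; omega
          refine ⟨hs, ?_⟩
          rw [hT _ _ hs, if_pos (by omega)]; omega
        · simp only [Prod.mk.injEq] at h
          obtain ⟨h1, rfl⟩ := h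
          have hs : InShape lam mu (i, c) := by
            rw [hS]; right; omega
          refine ⟨hs, ?_⟩
          rw [hT _ _ hs, if_neg (by omega)]; omega
    rw [this, Set.ncard_image_of_injOn]
    · rw [← Finset.coe_Icc, Set.ncard_coe_finset]
      simp [onesPart, hk1, hkn]
    · intro a ha b hb hab
      simp only [Set.mem_Icc] at ha hb
      simp only at hab
      split_ifs at hab <;> simp only [Prod.mk.injEq] at hab <;> omega
  · intro i j k hk
    have hfin2 : {p | p ∈ ReadingPrefix lam mu i j ∧ canonT lam mu m D p = k}.Finite :=
      hfin.subset fun p hp => hp.1.1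
    refine Set.ncard_le_ncard_of_injOn
      (fun p => if p.1 = m + 1 then (k, κ₁ + κ₂ + 1 - p.2) else (p.1 - 1, p.2)) ?_ ?_ hfin2
    · rintro ⟨a, b⟩ ⟨⟨h1, h2⟩, h3⟩
      rw [hT a b h1] at h3
      have h4 := (hS _ _).1 h1
      unfold ShapeD at h4
      have hb2 := hD2 b
      simp only at h2 ⊢
      by_cases ha : a = m + 1
      · rw [if_pos ha]
        rw [if_neg (by omega)] at h3
        have hj : κ₁ + κ₂ + 1 - (κ₁ + κ₂ + 1 - b) = b := by omega
        have hs : InShape lam mu (k, κ₁ + κ₂ + 1 - b) := by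
          rw [hS]; left; rw [hj]; omega
        refine ⟨⟨hs, ?_⟩, ?_⟩
        · simp only; omega
        · rw [hT _ _ hs, if_pos (by omega)]
      · rw [if_neg ha]
        have hs : InShape lam mu (a - 1, b) := by
          rw [hS]; unfold ShapeD; split_ifs at h3 <;> omega
        refine ⟨⟨hs, ?_⟩, ?_⟩
        · simp only; omega
        · rw [hT _ _ hs]; split_ifs at h3 ⊢ <;> omega
    · rintro ⟨a, b⟩ ⟨⟨h1, h2⟩, h3⟩ ⟨a', b'⟩ ⟨⟨h1', h2'⟩, h3'⟩ hab
      rw [hT a b h1] at h3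
      rw [hT a' b' h1'] at h3'
      have h4 := (hS _ _).1 h1
      have h4' := (hS _ _).1 h1'
      unfold ShapeD at h4 h4'
      have hb2 := hD2 b
      have hb2' := hD2 b'
      have e1 : κ₁ + κ₂ + 1 - b' = b → D (κ₁ + κ₂ + 1 - b') = D b := fun h => by rw [h]
      have e2 : κ₁ + κ₂ + 1 - b = b' → D (κ₁ + κ₂ + 1 - b) = D b' := fun h => by rw [h]
      simp only at hab
      ext <;> simp only <;> split_ifs at hab h3 h3' <;> simp only [Prod.mk.injEq] at hab <;> omega

lemma lr_le_canon (m n κ₁ κ₂ : ℕ) (hmn : n ≤ m) (D : ℕ → ℕ) (lam mu : ℕ → ℕ)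
    (hD2 : ∀ j, κ₂ < j → D j = n)
    (hS : ∀ i j, InShape lam mu (i, j) ↔ ShapeD m n κ₁ κ₂ D i j)
    (T : ℕ × ℕ → ℕ) (hT : IsLRTableau lam mu (onesPart κ₂ n) n T) :
    ∀ p, InShape lam mu p → T p ≤ canonT lam mu m D p := by
  have hfin := shape_finite m n κ₁ κ₂ D lam mu hD2 hS
  obtain ⟨hr, h0, hrow, hcol, hcont, hlat⟩ := hT
  have hrow' : ∀ i d j, InShape lam mu (i, j) → InShape lam mu (i, j + d) →
      T (i, j) ≤ T (i, j + d) := by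
    intro i d
    induction d with
    | zero => intro j _ _; exact le_rfl
    | succ d ih =>
      intro j h h'
      have h2 : InShape lam mu (i, j + d) := by
        unfold InShape at *; simp only at *; omega
      exact (ih j h h2).trans (hrow i (j + d) h2 h')
  have htop : ∀ i, i ≤ n → ∀ j, InShape lam mu (i, j) → T (i, j) ≤ i := by
    intro i
    induction i using Nat.strong_induction_on with
    | _ i ih =>
      intro hi j hj
      have hlast : InShape lam mu (i, lam i) := by
        unfold InShape at *; simp only at *; omega
      have hle : T (i, j) ≤ T (i, lam i) := by
        have := hrow' i (lam i - j) j hj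
        have hjl : j + (lam i - j) = lam i := by
          have := hj.2.2; simp only at this; omega
        rw [hjl] at this
        exact this hlast
      refine hle.trans ?_
      by_contra hcon
      have hi1 : 1 ≤ i := hj.1
      obtain ⟨k, hk⟩ : ∃ k, T (i, lam i) = k + 1 := ⟨T (i, lam i) - 1, by omega⟩
      have hl := hlat i (lam i) k (by omega)
      have he : {p | p ∈ ReadingPrefix lam mu i (lam i) ∧ T p = k} = ∅ := by
        rw [Set.eq_empty_iff_forall_notMem]
        rintro ⟨a, b⟩ ⟨⟨h1, h2⟩, h3⟩
        simp only at h2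
        rcases h2 with h2 | ⟨rfl, h2⟩
        · have := ih a h2 (by omega) b h1
          omega
        · have : b = lam a := le_antisymm h1.2.2 h2
          subst this
          omega
      rw [he, Set.ncard_empty] at hl
      have hf : {p | p ∈ ReadingPrefix lam mu i (lam i) ∧ T p = k + 1}.Finite :=
        hfin.subset fun p hp => hp.1.1
      have := (Set.ncard_pos hf).2 ⟨(i, lam i), ⟨hlast, Or.inr ⟨rfl, le_rfl⟩⟩, hk⟩
      omega
  have hbot : ∀ d i j, m < i → 1 ≤ j → i - m + D j + d = n → T (i, j) + d ≤ n := by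
    intro d
    induction d with
    | zero =>
      intro i j hi hj h
      exact (hr (i, j) ((hS _ _).2 (Or.inr ⟨hi, hj, by omega⟩))).2
    | succ d ih =>
      intro i j hi hj h
      have h1 := ih (i + 1) j (by omega) hj (by omega)
      have h2 := hcol i j ((hS _ _).2 (Or.inr ⟨hi, hj, by omega⟩))
        ((hS _ _).2 (Or.inr ⟨by omega, hj, by omega⟩))
      omega
  rintro ⟨i, j⟩ h
  have h1 := (hS _ _).1 h
  simp only [canonT, h, if_true]
  rcases h1 with h1 | h1
  · rw [if_pos (by omega)]
    exact htop i h1.2.1 j h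
  · rw [if_neg (by omega)]
    have := hbot (n - (i - m + D j)) i j h1.1 h1.2.1 (by omega)
    omega

lemma lr_sum (lam mu nu : ℕ → ℕ) (n : ℕ) (hfin : {p | InShape lam mu p}.Finite)
    (T : ℕ × ℕ → ℕ) (hT : IsLRTableau lam mu nu n T) :
    ∑ p ∈ hfin.toFinset, T p = ∑ k ∈ Finset.Icc 1 n, nu k * k := by
  rw [← Finset.sum_fiberwise_of_maps_to (g := T) (t := Finset.Icc 1 n)]
  · apply Finset.sum_congr rfl
    intro k hk
    rw [Finset.mem_Icc] at hk
    rw [← hT.2.2.2.2.1 k hk.1 hk.2]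
    rw [Finset.sum_congr rfl (g := fun _ => k) (fun p hp => (Finset.mem_filter.1 hp).2)]
    rw [Finset.sum_const, smul_eq_mul]
    congr 1
    rw [← Set.ncard_coe_finset]
    congr 1
    ext p
    simp
  · intro p hp
    rw [Finset.mem_Icc]
    exact hT.1 p (by simpa using hp)

lemma exists_D (m n κ₁ κ₂ : ℕ) (hn : 1 ≤ n) (hmn : n ≤ m)
    (lam : ℕ → ℕ) (hlam : IsPartitionOfLength (m + n) lam)
    (hpair : ∀ j, 1 ≤ j → j ≤ n → lam j + lam (m + n + 1 - j) = κ₁ + κ₂)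
    (hmid : ∀ j, 1 ≤ j → j ≤ m - n → lam (n + j) = κ₁)
    (hlast : κ₁ ≤ lam n) :
    ∃ D : ℕ → ℕ, (∀ j, D j ≤ n) ∧ (∀ j, κ₂ < j → D j = n) ∧ Monotone D ∧
      ∀ i j, InShape lam (onesPart κ₁ m) (i, j) ↔ ShapeD m n κ₁ κ₂ D i j := by
  have hanti : ∀ a b, 1 ≤ a → a ≤ b → lam b ≤ lam a := by
    intro a b ha hab
    induction b, hab using Nat.le_induction with
    | base => exact le_rfl
    | succ b hb ih => exact (hlam.1 b (by omega)).trans ih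
  let D : ℕ → ℕ := fun j => Nat.findGreatest (fun k => κ₁ + κ₂ < lam k + j) n
  have hD1 : ∀ j, D j ≤ n := fun j => Nat.findGreatest_le n
  have hD : ∀ j k, 1 ≤ k → k ≤ n → (k ≤ D j ↔ κ₁ + κ₂ < lam k + j) := by
    intro j k hk hkn
    constructor
    · intro h
      have h1 : κ₁ + κ₂ < lam (D j) + j :=
        Nat.findGreatest_of_ne_zero (P := fun k => κ₁ + κ₂ < lam k + j) (n := n) rfl (by omega)
      have := hanti k (D j) hk h
      omega
    · intro h
      exact Nat.le_findGreatest (P := fun k => κ₁ + κ₂ < lam k + j) hkn h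
  clear_value D
  refine ⟨D, hD1, ?_, ?_, ?_⟩
  · intro j hj
    exact le_antisymm (hD1 j) ((hD j n hn le_rfl).2 (by omega))
  · intro a b hab
    by_cases h : D a = 0
    · omega
    · have h1 := (hD a (D a) (by omega) (hD1 a)).1 le_rfl
      exact (hD b (D a) (by omega) (hD1 a)).2 (by omega)
  · intro i j
    unfold InShape ShapeD onesPart
    simp only
    by_cases h1 : 1 ≤ i ∧ i ≤ n
    · have hp := hpair i h1.1 h1.2
      have hd := hD (κ₁ + κ₂ + 1 - j) i h1.1 h1.2
      rw [if_pos (by omega), hd]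
      omega
    · by_cases h2 : 1 ≤ i ∧ i ≤ m
      · have hm := hmid (i - n) (by omega) (by omega)
        rw [show n + (i - n) = i by omega] at hm
        rw [if_pos h2]
        omega
      · rw [if_neg h2]
        by_cases h3 : m < i ∧ i ≤ m + n
        · have hp := hpair (m + n + 1 - i) (by omega) (by omega)
          rw [show m + n + 1 - (m + n + 1 - i) = i by omega] at hp
          have hd := hD j (m + n + 1 - i) (by omega) (by omega)
          omega
        · have := hlam.2 i
          omega

theorem lr_shape_implies_coeff_one (m n κ₁ κ₂ : ℕ) (hn : 1 ≤ n) (hmn : n ≤ m)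
    (hκ : κ₂ ≤ κ₁) (lam : ℕ → ℕ) (hlam : IsPartitionOfLength (m + n) lam)
    (hpair : ∀ j, 1 ≤ j → j ≤ n → lam j + lam (m + n + 1 - j) = κ₁ + κ₂)
    (hmid : ∀ j, 1 ≤ j → j ≤ m - n → lam (n + j) = κ₁)
    (hlast : κ₁ ≤ lam n) :
    LRCoeff lam (onesPart κ₁ m) (onesPart κ₂ n) n = 1 := by
  obtain ⟨D, hD1, hD2, hDm, hS⟩ := exists_D m n κ₁ κ₂ hn hmn lam hlam hpair hmid hlast
  have hanti : ∀ a b, 1 ≤ a → a ≤ b → lam b ≤ lam a := by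
    intro a b ha hab
    induction b, hab using Nat.le_induction with
    | base => exact le_rfl
    | succ b hb ih => exact (hlam.1 b (by omega)).trans ih
  have hsub : ∀ i, onesPart κ₁ m i ≤ lam i := by
    intro i
    unfold onesPart
    split_ifs with h
    · by_cases hi : i ≤ n
      · exact hlast.trans (hanti i n h.1 hi)
      · have hm := hmid (i - n) (by omega) (by omega)
        rw [show n + (i - n) = i by omega] at hm
        omega
    · omega
  unfold LRCoeff
  rw [if_pos hsub, Set.ncard_eq_one]
  have hc := canon_isLR m n κ₁ κ₂ hmn hκ D lam (onesPart κ₁ m) hD1 hD2 hDm hS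
  have hfin := shape_finite m n κ₁ κ₂ D lam (onesPart κ₁ m) hD2 hS
  refine ⟨canonT lam (onesPart κ₁ m) m D, ?_⟩
  ext T
  simp only [Set.mem_setOf_eq, Set.mem_singleton_iff]
  constructor
  · intro hT
    have hle := lr_le_canon m n κ₁ κ₂ hmn D lam (onesPart κ₁ m) hD2 hS T hT
    have hsum := (lr_sum _ _ _ n hfin T hT).trans (lr_sum _ _ _ n hfin _ hc).symm
    have hle' : ∀ p ∈ hfin.toFinset, T p ≤ canonT lam (onesPart κ₁ m) m D p :=
      fun p hp => hle p (by simpa using hp)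
    have heq := (Finset.sum_eq_sum_iff_of_le hle').1 hsum
    funext p
    by_cases hp : InShape lam (onesPart κ₁ m) p
    · exact heq p (by simpa using hp)
    · rw [hT.2.1 p hp, hc.2.1 p hp]
  · rintro rfl
    exact hc
end

section
/- Let m ≥ n ≥ 1 and let κ₁ ≥ κ₂ ≥ 0 be integers. Let λ be a partition of length at most m+n satisfying: λ_j + λ_{m+n+1−j} = κ₁ + κ₂ for j = 1,…,n; λ_{n+j} = κ₁ for j = 1,…,m−n; and λ_n ≥ κ₁. Set λ_0 := κ₁ + κ₂. Then every Littlewood–Richardson tableau of shape λ∖(κ₁·1^m) and weight κ₂·1^n has the following labeling: for 1 ≤ i ≤ n, all λ_i − κ₁ boxes in row i carry the symbol i; rows n+1,…,m contain no boxes; and for each 1 ≤ j ≤ n and each symbol i, the symbol i occurs in row m+j exactly λ_{i−j} − λ_{i−j+1} times if i ≥ j, and 0 times if i < j. -/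
/-- Extension of a partition by the value `c` at index `0`. -/
def lamExt (c : ℕ) (lam : ℕ → ℕ) : ℕ → ℕ := fun k => if k = 0 then c else lam k

theorem aux_anti {r : ℕ} {lam : ℕ → ℕ} (h : IsPartitionOfLength r lam) (a d : ℕ) (ha : 1 ≤ a) :
    lam (a + d) ≤ lam a := by
  induction d with
  | zero => simp
  | succ d ih => exact (h.1 (a + d) (by omega)).trans ih

theorem aux_row (lam mu T' : ℕ → ℕ) (T : ℕ × ℕ → ℕ) (r k : ℕ) (hr : 1 ≤ r) :
    {p : ℕ × ℕ | InShape lam mu p ∧ p.1 = r ∧ T p = k}.ncard =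
      ((Finset.Icc 1 (lam r)).filter (fun q => mu r < q ∧ T (r, q) = k)).card := by
  rw [← Set.ncard_coe_finset]
  conv_rhs => rw [← Set.ncard_image_of_injective _ (Prod.mk_right_injective r)]
  congr 1
  ext ⟨x, y⟩
  simp only [InShape, Set.mem_setOf_eq, Finset.coe_filter, Finset.mem_Icc, Set.mem_image,
    Prod.mk.injEq]
  constructor
  · rintro ⟨⟨h1, h2, h3⟩, rfl, h4⟩
    exact ⟨y, ⟨⟨by omega, h3⟩, h2, h4⟩, rfl, rfl⟩
  · rintro ⟨q, ⟨⟨h1, h2⟩, h3, h4⟩, rfl, rfl⟩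
    exact ⟨⟨hr, h3, h2⟩, rfl, h4⟩

theorem aux_total {N : ℕ} {lam : ℕ → ℕ} (h : IsPartitionOfLength N lam) (mu : ℕ → ℕ)
    (T : ℕ × ℕ → ℕ) (k : ℕ) :
    {p : ℕ × ℕ | InShape lam mu p ∧ T p = k}.ncard =
      ∑ r ∈ Finset.range N,
      ((Finset.Icc 1 (lam (r + 1))).filter (fun q => mu (r + 1) < q ∧ T (r + 1, q) = k)).card := by
  rw [← Finset.card_sigma, ← Set.ncard_coe_finset]
  symm
  refine Set.ncard_congr (fun x _ => (x.1 + 1, x.2)) ?_ ?_ ?_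
  · rintro ⟨r, q⟩ hx
    simp [InShape] at hx ⊢
    omega
  · rintro ⟨r, q⟩ ⟨r', q'⟩ _ _ hx
    simp at hx
    obtain ⟨rfl, rfl⟩ := hx
    rfl
  · rintro ⟨x, y⟩ ⟨⟨h1, h2, h3⟩, h4⟩
    have hN : x ≤ N := by
      by_contra hc
      have := h.2 x (by omega)
      simp only at *
      omega
    simp only at h1 h2 h3
    obtain ⟨z, rfl⟩ : ∃ z, x = z + 1 := ⟨x - 1, by omega⟩
    refine ⟨⟨z, y⟩, ?_, rfl⟩
    simp
    exact ⟨by omega, ⟨by omega, h3⟩, h2, h4⟩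

theorem aux_finite {N : ℕ} {lam : ℕ → ℕ} (h : IsPartitionOfLength N lam) (mu : ℕ → ℕ) :
    {p : ℕ × ℕ | InShape lam mu p}.Finite := by
  refine Set.Finite.subset (((Finset.range (N + 1)) ×ˢ (Finset.range (lam 1 + 1))).finite_toSet) ?_
  rintro ⟨x, y⟩ ⟨h1, h2, h3⟩
  simp only at h1 h2 h3
  have hN : x ≤ N := by
    by_contra hc
    have := h.2 x (by omega)
    omega
  have := aux_anti h 1 (x - 1) le_rfl
  rw [show 1 + (x - 1) = x by omega] at this
  simp
  omega

/-- top rows -/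
theorem aux_top {m n κ₁ : ℕ} {nu lam : ℕ → ℕ} (hmn : n ≤ m)
    (hlam : IsPartitionOfLength (m + n) lam) (T : ℕ × ℕ → ℕ)
    (hT : IsLRTableau lam (onesPart κ₁ m) nu n T) :
    ∀ i, 1 ≤ i → i ≤ n → ∀ j, InShape lam (onesPart κ₁ m) (i, j) → T (i, j) = i := by
  obtain ⟨hr, h0, hrow, hcol, hwt, hlat⟩ := hT
  intro i
  induction i using Nat.strong_induction_on with
  | _ i ih =>
  intro hi hin
  have hmu : onesPart κ₁ m i = κ₁ := by simp [onesPart]; omega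
  -- lower bound
  have hlow : ∀ j, InShape lam (onesPart κ₁ m) (i, j) → i ≤ T (i, j) := by
    intro j hj
    by_cases h1 : i = 1
    · subst h1; exact (hr _ hj).1
    · obtain ⟨z, rfl⟩ : ∃ z, i = z + 1 := ⟨i - 1, by omega⟩
      have hz : InShape lam (onesPart κ₁ m) (z, j) := by
        refine ⟨by simp only; omega, ?_, hj.2.2.trans (hlam.1 z (by omega))⟩
        have : onesPart κ₁ m z = κ₁ := by simp [onesPart]; omega
        have := hj.2.1
        simp only at *
        omega
      have e := ih z (by omega) (by omega) (by omega) j hz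
      have := hcol z j hz hj
      omega
  -- rightmost
  have hup : κ₁ < lam i → T (i, lam i) ≤ i := by
    intro hlt
    by_contra hc
    have hbox : InShape lam (onesPart κ₁ m) (i, lam i) := ⟨hi, by simp only; omega, le_rfl⟩
    obtain ⟨k, hk⟩ : ∃ k, T (i, lam i) = k + 1 := ⟨T (i, lam i) - 1, by omega⟩
    have hl := hlat i (lam i) k (by omega)
    have hpos : 0 < {p | p ∈ ReadingPrefix lam (onesPart κ₁ m) i (lam i) ∧ T p = k + 1}.ncard := by
      rw [Set.ncard_pos ((aux_finite hlam (onesPart κ₁ m)).subset (fun p hp => hp.1.1))]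
      exact ⟨(i, lam i), ⟨hbox, Or.inr ⟨rfl, le_rfl⟩⟩, hk⟩
    have hpos2 : 0 < {p | p ∈ ReadingPrefix lam (onesPart κ₁ m) i (lam i) ∧ T p = k}.ncard := by
      omega
    obtain ⟨⟨x, y⟩, ⟨hs, hor⟩, hTk⟩ := Set.nonempty_of_ncard_ne_zero hpos2.ne'
    simp only at hor
    rcases hor with hlt' | ⟨rfl, hle⟩
    · have := ih x hlt' hs.1 (by omega) y hs
      omega
    · have h3 := hs.2.2
      simp only at h3
      have : y = lam x := le_antisymm h3 hle
      subst this
      omega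
  have hmono : ∀ d j, InShape lam (onesPart κ₁ m) (i, j) → j + d = lam i →
      T (i, j) ≤ T (i, lam i) := by
    intro d
    induction d with
    | zero => intro j hj e; simp at e; rw [e]
    | succ d ihd =>
      intro j hj e
      have hs : InShape lam (onesPart κ₁ m) (i, j + 1) := by
        have := hj.2.1
        simp only at this
        exact ⟨hi, by simp only; omega, by simp only; omega⟩
      exact (hrow i j hj hs).trans (ihd (j + 1) hs (by omega))
  intro j hj
  have h2 := hj.2.1
  have h3 := hj.2.2
  simp only at h2 h3
  have := hmono (lam i - j) j hj (by omega)
  have := hup (by omega)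
  have := hlow j hj
  omega

theorem aux_col {m n κ₁ : ℕ} {nu lam : ℕ → ℕ}
    (hlam : IsPartitionOfLength (m + n) lam) (T : ℕ × ℕ → ℕ)
    (hT : IsLRTableau lam (onesPart κ₁ m) nu n T) (r q : ℕ) (hr : m < r) (hq : 1 ≤ q) (d : ℕ) :
    q ≤ lam (r + d) → T (r, q) + d ≤ T (r + d, q) := by
  obtain ⟨_, h0, hrow, hcol, hwt, hlat⟩ := hT
  have hmu : ∀ x, m < x → onesPart κ₁ m x = 0 := by intro x hx; simp [onesPart]; omega
  induction d with
  | zero => simp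
  | succ d ih =>
    intro h
    have h' : q ≤ lam (r + d) := h.trans (hlam.1 (r + d) (by omega))
    have := ih h'
    have := hcol (r + d) q ⟨by simp only; omega, by simp only [hmu (r + d) (by omega)]; omega, h'⟩
      ⟨by simp only; omega, by simp only [hmu (r + d + 1) (by omega)]; omega, h⟩
    change T (r, q) + (d + 1) ≤ T (r + d + 1, q)
    omega

/-- Under the conditions of Lemma (skl), every Littlewood–Richardson tableau of
shape `λ ∖ (κ₁·1^m)` and weight `κ₂·1^n` has the prescribed labeling: every box
of row `i` (`1 ≤ i ≤ n`) carries the symbol `i`; rows `n+1, …, m` carry no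
boxes; and row `m + j` carries the symbol `i` exactly
`λ_{i−j} − λ_{i−j+1}` times if `i ≥ j` (with `λ_0 := κ₁ + κ₂`) and `0` times if
`i < j`. -/
theorem lr_tableau_labeling (m n κ₁ κ₂ : ℕ) (hn : 1 ≤ n) (hmn : n ≤ m)
    (hκ : κ₂ ≤ κ₁) (lam : ℕ → ℕ) (hlam : IsPartitionOfLength (m + n) lam)
    (hpair : ∀ j, 1 ≤ j → j ≤ n → lam j + lam (m + n + 1 - j) = κ₁ + κ₂)
    (hmid : ∀ j, 1 ≤ j → j ≤ m - n → lam (n + j) = κ₁)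
    (hlast : κ₁ ≤ lam n) :
    ∀ T : ℕ × ℕ → ℕ, IsLRTableau lam (onesPart κ₁ m) (onesPart κ₂ n) n T →
      (∀ i j, 1 ≤ i → i ≤ n → InShape lam (onesPart κ₁ m) (i, j) →
        T (i, j) = i) ∧
      (∀ i j, n + 1 ≤ i → i ≤ m → ¬ InShape lam (onesPart κ₁ m) (i, j)) ∧
      (∀ j i, 1 ≤ j → j ≤ n → 1 ≤ i → i ≤ n →
        {p : ℕ × ℕ | InShape lam (onesPart κ₁ m) p ∧ p.1 = m + j ∧
            T p = i}.ncard =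
          if j ≤ i then
            lamExt (κ₁ + κ₂) lam (i - j) - lamExt (κ₁ + κ₂) lam (i - j + 1)
          else 0) := by
  intro T hT
  have htop := aux_top hmn hlam T hT
  have hmidrow : ∀ i, n + 1 ≤ i → i ≤ m → lam i = κ₁ := by
    intro i h1 h2
    have := hmid (i - n) (by omega) (by omega)
    rwa [show n + (i - n) = i by omega] at this
  have hmuT : ∀ x, 1 ≤ x → x ≤ m → onesPart κ₁ m x = κ₁ := by
    intro x h1 h2; simp [onesPart]; omega
  have hmuB : ∀ x, m < x → onesPart κ₁ m x = 0 := by intro x hx; simp [onesPart]; omega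
  refine ⟨fun i j h1 h2 h => htop i h1 h2 j h, ?_, ?_⟩
  · rintro i j h1 h2 ⟨h3, h4, h5⟩
    simp only [hmuT i (by omega) h2, hmidrow i h1 h2] at h4 h5
    omega
  have hge : ∀ k, 1 ≤ k → k ≤ n → κ₁ ≤ lam k := by
    intro k h1 h2
    have := aux_anti hlam k (n - k) h1
    rw [show k + (n - k) = n by omega] at this
    omega
  -- counts in the bottom rows
  obtain ⟨a, ha⟩ : ∃ a : ℕ → ℕ → ℕ, ∀ j k, a j k =
      ((Finset.Icc 1 (lam (m + j))).filter (fun q => T (m + j, q) = k)).card := ⟨_, fun _ _ => rfl⟩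
  have ha' : ∀ j k, 1 ≤ j → ((Finset.Icc 1 (lam (m + j))).filter
      (fun q => onesPart κ₁ m (m + j) < q ∧ T (m + j, q) = k)).card = a j k := by
    intro j k hj
    rw [ha]
    congr 1
    apply Finset.filter_congr
    intro q hq
    rw [hmuB (m + j) (by omega)]
    simp only [Finset.mem_Icc] at hq
    constructor
    · exact fun h => h.2
    · exact fun h => ⟨by omega, h⟩
  have hsum : ∀ k, 1 ≤ k → k ≤ n → ∑ j ∈ Finset.range n, a (j + 1) k = lam (m + n + 1 - k) := by
    intro k hk1 hk2
    have h1 := hT.2.2.2.2.1 k hk1 hk2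
    rw [aux_total hlam, Finset.sum_range_add] at h1
    have e1 : ∑ x ∈ Finset.range n, ((Finset.Icc 1 (lam (m + x + 1))).filter
        (fun q => onesPart κ₁ m (m + x + 1) < q ∧ T (m + x + 1, q) = k)).card
        = ∑ j ∈ Finset.range n, a (j + 1) k :=
      Finset.sum_congr rfl (fun x _ => ha' (x + 1) k (by omega))
    have e2 : ∑ r ∈ Finset.range m, ((Finset.Icc 1 (lam (r + 1))).filter
        (fun q => onesPart κ₁ m (r + 1) < q ∧ T (r + 1, q) = k)).card = lam k - κ₁ := by
      rw [Finset.sum_eq_single (k - 1)]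
      · rw [show k - 1 + 1 = k by omega, hmuT k hk1 (by omega)]
        have : (Finset.Icc 1 (lam k)).filter (fun q => κ₁ < q ∧ T (k, q) = k)
            = Finset.Ioc κ₁ (lam k) := by
          ext q
          simp only [Finset.mem_filter, Finset.mem_Icc, Finset.mem_Ioc]
          constructor
          · rintro ⟨⟨_, h⟩, h', _⟩
            exact ⟨h', h⟩
          · rintro ⟨h, h'⟩
            refine ⟨⟨by omega, h'⟩, h, htop k hk1 hk2 q ⟨hk1, ?_, h'⟩⟩
            simp only [hmuT k hk1 (by omega)]
            exact h
        rw [this, Nat.card_Ioc]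
      · intro r hr hne
        simp only [Finset.mem_range] at hr
        rw [Finset.card_eq_zero, Finset.filter_eq_empty_iff]
        rintro q hq ⟨h2, h3⟩
        simp only [Finset.mem_Icc] at hq
        by_cases hrn : r + 1 ≤ n
        · have := htop (r + 1) (by omega) hrn q ⟨by simp only; omega, h2, hq.2⟩
          omega
        · have := hmidrow (r + 1) (by omega) (by omega)
          rw [hmuT (r + 1) (by omega) (by omega)] at h2
          omega
      · intro h
        simp only [Finset.mem_range] at h
        omega
    rw [e1, e2] at h1
    have e3 : onesPart κ₂ n k = κ₂ := by simp [onesPart]; omega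
    have := hpair k hk1 hk2
    have := hge k hk1 hk2
    omega
  -- cumulative counts
  have hc : ∀ i, i ≤ n → ∀ j ∈ Finset.range n, (if j < i then lam (m + n + 1 + j - i) else 0)
      = ∑ k ∈ Finset.range i, a (j + 1) (k + 1) := by
    intro i hi
    rw [← Finset.sum_eq_sum_iff_of_le]
    · rw [Finset.sum_comm]
      rw [Finset.sum_congr rfl (fun k hk => hsum (k + 1) (by omega)
        (by simp only [Finset.mem_range] at hk; omega))]
      rw [← Finset.sum_range_reflect (fun k => lam (m + n + 1 - (k + 1)))]
      rw [← Finset.sum_filter]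
      have : (Finset.range n).filter (fun j => j < i) = Finset.range i := by
        ext x; simp; omega
      rw [this]
      apply Finset.sum_congr rfl
      intro x hx
      simp only [Finset.mem_range] at hx
      congr 1
      omega
    · intro j hj
      split_ifs with hji
      · simp only [Finset.mem_range] at hj
        have key := aux_col hlam T hT (m + (j + 1))
        have hle : ∀ q ∈ Finset.Icc 1 (lam (m + n + 1 + j - i)),
            q ≤ lam (m + (j + 1)) ∧ 1 ≤ T (m + (j + 1), q) ∧ T (m + (j + 1), q) ≤ i := by
          intro q hq
          simp only [Finset.mem_Icc] at hq
          have e : m + n + 1 + j - i = m + (j + 1) + (n - i) := by omega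
          rw [e] at hq
          have k1 := key q (by omega) hq.1 (n - i) hq.2
          have k2 := aux_anti hlam (m + (j + 1)) (n - i) (by omega)
          have k3 := hT.1 (m + (j + 1) + (n - i), q) ⟨by simp only; omega,
            by simp only [hmuB (m + (j + 1) + (n - i)) (by omega)]; omega, hq.2⟩
          have k4 := hT.1 (m + (j + 1), q) ⟨by simp only; omega,
            by simp only [hmuB (m + (j + 1)) (by omega)]; omega, hq.2.trans k2⟩
          omega
        have hf := Finset.card_eq_sum_card_fiberwise (s := Finset.Icc 1 (lam (m + n + 1 + j - i)))
          (t := Finset.range i) (f := fun q => T (m + (j + 1), q) - 1) (by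
            intro q hq
            have := hle q hq
            simp
            omega)
        rw [Nat.card_Icc, Nat.add_sub_cancel] at hf
        rw [hf]
        apply Finset.sum_le_sum
        intro k hk
        rw [ha]
        apply Finset.card_le_card
        intro q hq
        simp only [Finset.mem_filter] at hq ⊢
        have := hle q hq.1
        have h1 := hq.1
        simp only [Finset.mem_Icc] at h1 ⊢
        omega
      · exact Nat.zero_le _
  intro j i hj1 hj2 hi1 hi2
  rw [aux_row lam _ lam T (m + j) i (by omega), ha' j i hj1]
  obtain ⟨j, rfl⟩ : ∃ z, j = z + 1 := ⟨j - 1, by omega⟩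
  obtain ⟨i, rfl⟩ : ∃ z, i = z + 1 := ⟨i - 1, by omega⟩
  have c1 := hc (i + 1) hi2 j (by simp; omega)
  have c2 := hc i (by omega) j (by simp; omega)
  rw [Finset.sum_range_succ, ← c2] at c1
  by_cases h : j ≤ i
  · rw [if_pos (by omega)] at c1 ⊢
    have p1 := hpair (i - j + 1) (by omega) (by omega)
    rw [show m + n + 1 - (i - j + 1) = m + n + 1 + j - (i + 1) by omega] at p1
    rw [show i + 1 - (j + 1) = i - j by omega]
    by_cases h' : j < i
    · rw [if_pos h'] at c1
      have p2 := hpair (i - j) (by omega) (by omega)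
      rw [show m + n + 1 - (i - j) = m + n + 1 + j - i by omega] at p2
      simp only [lamExt, if_neg (show ¬ (i - j = 0) by omega), if_neg (Nat.succ_ne_zero (i - j))]
      omega
    · rw [if_neg h'] at c1
      simp only [lamExt, if_pos (show i - j = 0 by omega), if_neg (Nat.succ_ne_zero (i - j))]
      omega
  · rw [if_neg (by omega)] at c1 ⊢
    omega
end

section
/- Let m ≥ n ≥ 1 and let ã ≥ a ≥ c ≥ d ≥ 0 be integers. Let w be the partition of length m with w_i = ã for 1 ≤ i ≤ n and w_i = a for n < i ≤ m, and let v be the partition of length n with v_1 = c + (n−1)d and v_i = c − d for 2 ≤ i ≤ n. Let λ be a partition of length at most m+n satisfying: λ_j + λ_{m+n+1−j} = ã + c for j = 1,…,n; λ_{n+j} = a for j = 1,…,m−n; λ_n ≥ ã; and λ_i − λ_{i+1} ≥ d for i = 1,…,n−1. Set λ_0 := ã + c. Then every Littlewood–Richardson tableau of shape λ∖w and weight v has the following labeling: for 1 ≤ i ≤ n, all λ_i − ã boxes in row i carry the symbol i; rows n+1,…,m contain no boxes; and for each 1 ≤ j ≤ n the symbol i occurs in row m+j exactly μ^i_j times,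 where μ^i_j = λ_{i−j} − λ_{i−j+1} for 2 ≤ j ≤ i ≤ n, μ^i_1 = λ_{i−1} − λ_i − d for 2 ≤ i ≤ n, μ^1_1 = λ_0 + (n−1)d − λ_1, and μ^i_j = 0 for i < j. -/
/-- The prescribed multiplicity `μ^i_j` of the symbol `i` in row `m + j` of a
Littlewood–Richardson tableau of shape `λ ∖ w` and weight `v`:
`μ^i_j = λ_{i−j} − λ_{i−j+1}` for `2 ≤ j ≤ i`, `μ^i_1 = λ_{i−1} − λ_i − d` for
`i ≥ 2`, `μ^1_1 = λ_0 + (n−1)d − λ_1`, `μ^i_j = 0` for `i < j`, where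
`λ_0 := ã + c`. -/
def muCount (ta c d n : ℕ) (lam : ℕ → ℕ) (i j : ℕ) : ℕ :=
  if i < j then 0
  else if j = 1 then
    (if i = 1 then ta + c + (n - 1) * d - lam 1 else lam (i - 1) - lam i - d)
  else lamExt (ta + c) lam (i - j) - lamExt (ta + c) lam (i - j + 1)

theorem lrs_arith (n : ℕ) (hn : 1 ≤ n) (A : ℕ → ℕ → ℤ) (al : ℕ → ℤ) (c d : ℤ) (hal : al 0 = c)
    (h0 : ∀ k, 1 ≤ k → k ≤ n → A 0 k = al k)
    (hv1 : A n 1 = c + (n - 1) * d)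
    (hv2 : ∀ k, 2 ≤ k → k ≤ n → A n k = c - d)
    (h2 : ∀ j k, j < n → 1 ≤ k → k < n → A (j+1) (k+1) ≤ A j k)
    (h3 : ∀ j k, A j k ≤ A (j+1) k)
    (h4 : ∀ j, 1 ≤ j → j < n → A (j+1) 1 = A j 1)
    (h5 : ∀ j, j < n → ∑ k ∈ Finset.range n, A (j+1) (k+1)
      = ∑ k ∈ Finset.range n, A j (k+1) + c - al (n - j))
    (h6 : ∀ j, j < n → A (j+1) n - A j n ≤ al (n - j - 1) - al (n - j)) :
    (∀ j, 1 ≤ j → j ≤ n → A j 1 = c + (n - 1) * d) ∧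
    (∀ j k, 1 ≤ j → j ≤ n → 2 ≤ k → k ≤ n → A j k = al (k - j) - d) := by
  have C1 : ∀ t j, j + t = n → 1 ≤ j → A j 1 = c + (n - 1) * d := by
    intro t
    induction t with
    | zero => intro j hj _; simp at hj; rw [hj]; exact hv1
    | succ t ih =>
      intro j hj h
      rw [← h4 j h (by omega)]
      exact ih (j+1) (by omega) (by omega)
  have C2 : ∀ t j k, j + t = n → 2 ≤ k → k ≤ j → A j k = c - d := by
    intro t
    induction t with
    | zero => intro j k hj h h'; simp at hj; subst hj; exact hv2 k h h'
    | succ t ih =>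
      intro j k hj h h'
      have a1 := ih (j+1) (k+1) (by omega) (by omega) (by omega)
      have a2 := ih (j+1) k (by omega) (by omega) (by omega)
      have a3 := h2 j k (by omega) (by omega) (by omega)
      have a4 := h3 j k
      linarith
  have C3 : 2 ≤ n → ∀ t j, j + t = n → al (n - j) - d ≤ A j n := by
    intro hn2 t
    induction t with
    | zero => 
      intro j hj; simp at hj; subst hj
      rw [hv2 j hn2 le_rfl]; simp [hal]
    | succ t ih =>
      intro j hj
      have a1 := ih (j+1) (by omega)
      have a2 := h6 j (by omega)
      rw [show n - j - 1 = n - (j+1) by omega] at a2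
      linarith
  have C4 : 2 ≤ n → ∀ t j k, k + t = n → 1 ≤ j → j < k → al (k - j) - d ≤ A j k := by
    intro hn2 t
    induction t with
    | zero =>
      intro j k hk h h'; simp at hk; subst hk
      exact C3 hn2 (k - j) j (by omega)
    | succ t ih =>
      intro j k hk h h'
      have a1 := ih (j+1) (k+1) (by omega) (by omega) (by omega)
      have a2 := h2 j k (by omega) (by omega) (by omega)
      rw [show k + 1 - (j+1) = k - j by omega] at a1
      linarith
  have C5 : ∀ j, j ≤ n → ∑ k ∈ Finset.range n, A j (k+1) = ∑ k ∈ Finset.range n, al (k+1-j) := by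
    intro j
    induction j with
    | zero => 
      intro _
      apply Finset.sum_congr rfl
      intro k hk
      simp at hk
      rw [h0 _ (by omega) (by omega)]; rfl
    | succ j ih =>
      intro hj
      rw [h5 j (by omega), ih (by omega)]
      have e1 := Finset.sum_range_succ (fun k => al (k - j)) n
      have e2 := Finset.sum_range_succ' (fun k => al (k - j)) n
      simp only [Nat.zero_sub, hal] at e2
      have e3 : ∀ k, k + 1 - (j+1) = k - j := by omega
      simp only [e3]
      linarith
  refine ⟨fun j h h' => C1 (n-j) j (by omega) h, ?_⟩
  intro j k hj hjn hk hkn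
  have hle : ∀ i ∈ Finset.range n, al (i+1-j) + (if i = 0 then (n-1)*d else -d) ≤ A j (i+1) := by
    intro i hi
    simp at hi
    split_ifs with hi0
    · subst hi0
      have := C1 (n-j) j (by omega) hj
      rw [show 0 + 1 - j = 0 by omega, hal]
      simp [this]
    · by_cases hij : i + 1 ≤ j
      · rw [C2 (n-j) j (i+1) (by omega) (by omega) hij, show i + 1 - j = 0 by omega, hal]
        linarith
      · have := C4 (by omega) (n-(i+1)) j (i+1) (by omega) hj (by omega)
        linarith
  have hz : ∑ i ∈ Finset.range n, (if i = 0 then ((n:ℤ)-1)*d else -d) = 0 := by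
    obtain ⟨q, rfl⟩ : ∃ q, n = q + 1 := ⟨n-1, by omega⟩
    rw [Finset.sum_range_succ']
    simp
  have hs : ∑ i ∈ Finset.range n, (al (i+1-j) + (if i = 0 then ((n:ℤ)-1)*d else -d))
      = ∑ i ∈ Finset.range n, A j (i+1) := by
    rw [Finset.sum_add_distrib, hz, C5 j hjn, add_zero]
  have := (Finset.sum_eq_sum_iff_of_le hle).1 hs (k-1) (by simp; omega)
  rw [show k - 1 + 1 = k by omega, if_neg (by omega)] at this
  linarith

open Classical in
theorem lrs_count (lam mu : ℕ → ℕ) (R : ℕ) (P : ℕ × ℕ → Prop)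
    (hP : ∀ p, InShape lam mu p → P p → p.1 ≤ R) :
    {p | InShape lam mu p ∧ P p}.ncard =
      ∑ i ∈ Finset.Icc 1 R, ((Finset.Ioc (mu i) (lam i)).filter (fun x => P (i, x))).card := by
  rw [← Finset.card_sigma, ← Set.ncard_coe_finset]
  symm
  apply Set.ncard_congr (fun (x : (_ : ℕ) × ℕ) _ => (x.1, x.2))
  · rintro ⟨i, x⟩ h
    simp at h
    exact ⟨⟨h.1.1, h.2.1⟩, h.2.2⟩
  · rintro ⟨i, x⟩ ⟨i', x'⟩ _ _ h
    simp at h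
    simp [h]
  · rintro ⟨i, x⟩ ⟨h, h'⟩
    refine ⟨⟨i, x⟩, ?_, rfl⟩
    have := hP _ h h'
    simp
    exact ⟨⟨h.1, this⟩, h.2, h'⟩

/-- Under the hypotheses of Lemma (sl), every Littlewood–Richardson tableau of
shape `λ ∖ w` and weight `v` has the prescribed labeling: every box of row `i`
(`1 ≤ i ≤ n`) carries the symbol `i`; rows `n+1, …, m` carry no boxes; and row
`m + j` carries the symbol `i` exactly `μ^i_j` times. -/
theorem lr_spherical_tableau_labeling (m n ta a c d : ℕ) (hn : 1 ≤ n)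
    (hmn : n ≤ m) (h1 : a ≤ ta) (h2 : c ≤ a) (h3 : d ≤ c)
    (w : ℕ → ℕ)
    (hw1 : ∀ i, 1 ≤ i → i ≤ n → w i = ta)
    (hw2 : ∀ i, n < i → i ≤ m → w i = a)
    (hw3 : ∀ i, m < i → w i = 0)
    (v : ℕ → ℕ)
    (hv1 : v 1 = c + (n - 1) * d)
    (hv2 : ∀ i, 2 ≤ i → i ≤ n → v i = c - d)
    (hv3 : ∀ i, n < i → v i = 0)
    (lam : ℕ → ℕ) (hlam : IsPartitionOfLength (m + n) lam)
    (hpair : ∀ j, 1 ≤ j → j ≤ n → lam j + lam (m + n + 1 - j) = ta + c)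
    (hmid : ∀ j, 1 ≤ j → j ≤ m - n → lam (n + j) = a)
    (hlast : ta ≤ lam n)
    (hgap : ∀ i, 1 ≤ i → i ≤ n - 1 → lam (i + 1) + d ≤ lam i) :
    ∀ T : ℕ × ℕ → ℕ, IsLRTableau lam w v n T →
      (∀ i j, 1 ≤ i → i ≤ n → InShape lam w (i, j) → T (i, j) = i) ∧
      (∀ i j, n + 1 ≤ i → i ≤ m → ¬ InShape lam w (i, j)) ∧
      (∀ j i, 1 ≤ j → j ≤ n → 1 ≤ i → i ≤ n →
        {p : ℕ × ℕ | InShape lam w p ∧ p.1 = m + j ∧ T p = i}.ncard =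
          muCount ta c d n lam i j) := by
  classical
  intro T ⟨hT1, hT2, hrow, hcol, hwt, hlat⟩
  have hmono : ∀ i j, 1 ≤ i → i ≤ j → lam j ≤ lam i := by
    intro i j hi hij
    induction j, hij using Nat.le_induction with
    | base => exact le_rfl
    | succ j hj ih => exact (hlam.1 j (by omega)).trans ih
  have hrow' : ∀ i j j', j ≤ j' → InShape lam w (i, j) → InShape lam w (i, j') →
      T (i, j) ≤ T (i, j') := by
    intro i j j' hjj
    induction j', hjj using Nat.le_induction with
    | base => intros; exact le_rfl
    | succ j' hj ih =>
      intro h h'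
      have h'' : InShape lam w (i, j') := ⟨h.1, lt_of_lt_of_le h.2.1 hj, (Nat.le_succ _).trans h'.2.2⟩
      exact (ih h h'').trans (hrow _ _ h'' h')
  have hbound : ∀ p, InShape lam w p → p.1 ≤ m + n := by
    intro p hp
    by_contra hc
    have := hlam.2 p.1 (by omega)
    have h := hp.2
    omega
  have hfin : {p | InShape lam w p}.Finite := by
    apply (Finset.finite_toSet (Finset.range (m+n+1) ×ˢ Finset.range (lam 1 + 1))).subset
    intro p hp
    have a1 := hbound p hp
    have a2 := hmono 1 p.1 le_rfl hp.1
    have a3 := hp.2.2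
    simp
    omega
  -- top part
  have hge : ∀ i j, 1 ≤ i → i ≤ n → InShape lam w (i, j) → i ≤ T (i, j) := by
    intro i j hi
    induction i, hi using Nat.le_induction with
    | base => intro _ h; exact (hT1 _ h).1
    | succ i hi ih =>
      intro hin h
      have h' : InShape lam w (i, j) := by
        refine ⟨hi, ?_, h.2.2.trans (hlam.1 i hi)⟩
        have := h.2.1
        simp only at this ⊢
        rw [hw1 _ hi (by omega)]
        rwa [hw1 _ (by omega) hin] at this
      have := ih (by omega) h'
      have := hcol i j h' h
      omega
  have htop : ∀ i j, 1 ≤ i → i ≤ n → InShape lam w (i, j) → T (i, j) = i := by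
    intro i
    induction i using Nat.strong_induction_on with
    | _ i ih =>
      intro j hi hin h
      have hg := hge i j hi hin h
      by_contra hne
      obtain ⟨k, hk⟩ : ∃ k, T (i, j) = k + 1 := ⟨T (i,j) - 1, by omega⟩
      have hl := hlat i j k (by omega)
      have hpos : 0 < {p | p ∈ ReadingPrefix lam w i j ∧ T p = k + 1}.ncard := by
        rw [Set.ncard_pos (hfin.subset (fun p hp => hp.1.1))]
        exact ⟨(i, j), ⟨h, Or.inr ⟨rfl, le_rfl⟩⟩, hk⟩
      have hpos2 := lt_of_lt_of_le hpos hl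
      rw [Set.ncard_pos (hfin.subset (fun p hp => hp.1.1))] at hpos2
      obtain ⟨⟨i', j'⟩, ⟨hs, hor⟩, hTk⟩ := hpos2
      simp only at hor
      rcases hor with hlt | ⟨rfl, hle⟩
      · have := ih i' hlt j' hs.1 (by omega) hs
        omega
      · have := hrow' i' j j' hle h hs
        omega
  have hmidE : ∀ i j, n + 1 ≤ i → i ≤ m → ¬ InShape lam w (i, j) := by
    intro i j hi him h
    have a1 := hw2 i (by omega) him
    have a2 := hmid (i - n) (by omega) (by omega)
    rw [show n + (i - n) = i by omega] at a2
    have := h.2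
    simp only at this
    omega
  refine ⟨htop, hmidE, ?_⟩
  -- row counts
  let r : ℕ → ℕ → ℕ := fun i k => ((Finset.Ioc (w i) (lam i)).filter (fun x => T (i, x) = k)).card
  let A : ℕ → ℕ → ℕ := fun j k => ∑ i ∈ Finset.Icc 1 (m + j), r i k
  have hAs : ∀ j k, A (j+1) k = A j k + r (m + (j+1)) k := by
    intro j k
    simp only [A]
    rw [← add_assoc, Finset.sum_Icc_succ_top (by omega)]
  have hsh : ∀ i x, 1 ≤ i → (x ∈ Finset.Ioc (w i) (lam i) ↔ InShape lam w (i, x)) := by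
    intro i x hi
    simp [InShape, hi]
  have hrtop : ∀ i k, 1 ≤ i → i ≤ n → r i k = if i = k then lam i - ta else 0 := by
    intro i k hi hin
    simp only [r]
    split_ifs with hik
    · rw [Finset.filter_true_of_mem, Nat.card_Ioc, hw1 i hi hin]
      intro x hx
      rw [← hik]; exact htop i x hi hin ((hsh i x hi).1 hx)
    · rw [Finset.filter_false_of_mem, Finset.card_empty]
      intro x hx
      rw [htop i x hi hin ((hsh i x hi).1 hx)]
      exact hik
  have hrmid : ∀ i k, n < i → i ≤ m → r i k = 0 := by
    intro i k hi him
    simp only [r]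
    rw [Finset.filter_false_of_mem, Finset.card_empty]
    intro x hx
    exact absurd ((hsh i x (by omega)).1 hx) (hmidE i x hi him)
  have hA0 : ∀ k, 1 ≤ k → k ≤ n → A 0 k = lam k - ta := by
    intro k hk hkn
    simp only [A, add_zero]
    rw [Finset.sum_eq_single k]
    · rw [hrtop k k hk hkn, if_pos rfl]
    · intro i hi hik
      simp at hi
      by_cases hin : i ≤ n
      · rw [hrtop i k hi.1 hin, if_neg hik]
      · exact hrmid i k (by omega) hi.2
    · intro h
      simp at h
      omega
  have hAn : ∀ k, 1 ≤ k → k ≤ n → A n k = v k := by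
    intro k hk hkn
    rw [← hwt k hk hkn, lrs_count lam w (m+n) (fun p => T p = k) (fun p hp _ => hbound p hp)]
    simp only [A, r]
    congr!
  have hA2 : ∀ j k, 1 ≤ k → A (j+1) (k+1) ≤ A j k := by
    intro j k hk
    have hex : ∃ x, ∀ y, x ≤ y → InShape lam w (m + (j+1), y) → k + 1 ≤ T (m + (j+1), y) := by
      refine ⟨lam (m + (j+1)) + 1, ?_⟩
      intro y hy h
      have := h.2.2
      simp only at this
      omega
    have hx := Nat.find_spec hex
    have hmin := fun y (hy : y < Nat.find hex) => Nat.find_min hex hy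
    set x := Nat.find hex with hxdef
    have hlow : ∀ y, y < x → InShape lam w (m + (j+1), y) → T (m + (j+1), y) ≤ k := by
      intro y hy h
      by_contra hc
      apply hmin y hy
      intro z hz h'
      have := hrow' _ y z hz h h'
      omega
    have hl := hlat (m + (j+1)) x k hk
    have key : ∀ q, {p | p ∈ ReadingPrefix lam w (m + (j+1)) x ∧ T p = q}.ncard =
        A j q + ((Finset.Ioc (w (m + (j+1))) (lam (m + (j+1)))).filter
          (fun y => x ≤ y ∧ T (m + (j+1), y) = q)).card := by
      intro q
      have := lrs_count lam w (m + (j+1))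
        (fun p => (p.1 < m + (j+1) ∨ (p.1 = m + (j+1) ∧ x ≤ p.2)) ∧ T p = q)
        (fun p _ h => by rcases h.1 with h | h <;> omega)
      have e : {p | p ∈ ReadingPrefix lam w (m + (j+1)) x ∧ T p = q} =
        {p | InShape lam w p ∧ (p.1 < m + (j+1) ∨ (p.1 = m + (j+1) ∧ x ≤ p.2)) ∧ T p = q} := by
        ext p
        simp [ReadingPrefix, and_assoc]
      rw [e, this, ← add_assoc, Finset.sum_Icc_succ_top (by omega)]
      congr 1
      · apply Finset.sum_congr rfl
        intro i hi
        simp at hi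
        simp only [r]
        congr 1
        apply Finset.filter_congr
        intro y _
        have : i < m + j + 1 := by omega
        simp [this]
      · congr 1
        ext y
        simp
    rw [key, key] at hl
    have e1 : ((Finset.Ioc (w (m + (j+1))) (lam (m + (j+1)))).filter
          (fun y => x ≤ y ∧ T (m + (j+1), y) = k)) = ∅ := by
      apply Finset.filter_false_of_mem
      intro y hy ⟨h1, h2⟩
      have := hx y h1 ((hsh _ _ (by omega)).1 hy)
      omega
    have e2 : ((Finset.Ioc (w (m + (j+1))) (lam (m + (j+1)))).filter
          (fun y => x ≤ y ∧ T (m + (j+1), y) = k+1)).card = r (m + (j+1)) (k+1) := by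
      simp only [r]
      congr 1
      apply Finset.filter_congr
      intro y hy
      refine ⟨fun h => h.2, fun h => ⟨?_, h⟩⟩
      by_contra hc
      have := hlow y (by omega) ((hsh _ _ (by omega)).1 hy)
      omega
    rw [e1, e2] at hl
    rw [hAs]
    simpa using hl
  have hA4 : ∀ j, 1 ≤ j → A (j+1) 1 = A j 1 := by
    intro j hj
    rw [hAs]
    have : r (m + (j+1)) 1 = 0 := by
      simp only [r]
      rw [Finset.filter_false_of_mem, Finset.card_empty]
      intro x hx hT
      have h := (hsh _ x (by omega)).1 hx
      have h' : InShape lam w (m + j, x) := by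
        refine ⟨by simp only; omega, ?_, h.2.2.trans (hlam.1 (m+j) (by omega))⟩
        have := h.2.1
        simp only at this ⊢
        rw [hw3 _ (by omega)]
        omega
      have a1 := hcol _ _ h' h
      have a2 := (hT1 _ h').1
      have a3 : T (m + j + 1, x) = 1 := hT
      omega
    omega
  have hA6 : ∀ j, r (m + (j+1)) n + lam (m + (j + 1) + 1) ≤ lam (m + (j+1)) := by
    intro j
    have hd := hlam.1 (m + (j+1)) (by omega)
    have : r (m + (j+1)) n ≤ (Finset.Ioc (lam (m + (j+1) + 1)) (lam (m + (j+1)))).card := by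
      apply Finset.card_le_card
      intro x hx
      rw [Finset.mem_filter] at hx
      obtain ⟨hx, hT⟩ := hx
      have h := (hsh _ x (by omega)).1 hx
      have hu := h.2.2
      have hp := h.2.1
      simp only at hu hp
      rw [Finset.mem_Ioc]
      refine ⟨?_, hu⟩
      by_contra hc
      have h' : InShape lam w (m + (j+1) + 1, x) := by
        refine ⟨by simp only; omega, ?_, by simp only; omega⟩
        simp only
        rw [hw3 _ (by omega)]
        omega
      have a1 := hcol _ _ h h'
      have a2 := (hT1 _ h').2
      omega
    rw [Nat.card_Ioc] at this
    omega
  have hA5 : ∀ j, ∑ k ∈ Finset.range n, r (m + (j+1)) (k+1) = lam (m + (j+1)) := by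
    intro j
    have := Finset.card_eq_sum_card_fiberwise (s := Finset.Ioc (w (m + (j+1))) (lam (m + (j+1))))
      (t := Finset.range n) (f := fun x => T (m + (j+1), x) - 1) (by
        intro x hx
        have a := hT1 _ ((hsh _ x (by omega)).1 hx)
        simp
        omega)
    rw [Nat.card_Ioc, hw3 _ (by omega)] at this
    simp only [r]
    rw [hw3 (m + (j+1)) (by omega)]
    rw [Nat.sub_zero] at this
    refine Eq.trans ?_ this.symm
    apply Finset.sum_congr rfl
    intro k _
    congr 1
    apply Finset.filter_congr
    intro x hx
    have a := hT1 (m + (j+1), x) ((hsh _ x (by omega)).1 (by rw [hw3 _ (by omega)]; exact hx))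
    omega
  have hta : ∀ k, 1 ≤ k → k ≤ n → ta ≤ lam k := fun k hk hkn => hlast.trans (hmono k n hk hkn)
  have hbeta : ∀ j, j < n → lam (n - j) + lam (m + (j+1)) = ta + c := by
    intro j hj
    have := hpair (n - j) (by omega) (by omega)
    rwa [show m + n + 1 - (n - j) = m + (j+1) by omega] at this
  have hle0 : ∀ k, k ≠ 0 → lamExt (ta + c) lam k = lam k := fun k hk => by simp [lamExt, hk]
  have hle00 : lamExt (ta + c) lam 0 = ta + c := by simp [lamExt]
  obtain ⟨R1, R2⟩ := lrs_arith n hn (fun j k => (A j k : ℤ))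
    (fun k => (lamExt (ta + c) lam k : ℤ) - ta) c d (by simp [hle00])
    (by
      intro k hk hkn
      have := hta k hk hkn
      rw [hA0 k hk hkn, hle0 k (by omega)]
      omega)
    (by
      rw [hAn 1 le_rfl hn, hv1]
      push_cast [hn]
      ring)
    (by
      intro k hk hkn
      rw [hAn k (by omega) hkn, hv2 k hk hkn]
      push_cast [h3]
      ring)
    (by
      intro j k _ hk _
      exact_mod_cast hA2 j k hk)
    (by
      intro j k
      rw [hAs]
      push_cast
      omega)
    (by
      intro j hj _
      exact_mod_cast hA4 j hj)
    (by
      intro j hj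
      have a1 := hA5 j
      have a2 := hbeta j hj
      rw [hle0 _ (by omega)]
      have : ∑ k ∈ Finset.range n, A (j+1) (k+1) = ∑ k ∈ Finset.range n, A j (k+1)
          + lam (m + (j+1)) := by
        rw [← a1, ← Finset.sum_add_distrib]
        exact Finset.sum_congr rfl (fun k _ => hAs j (k+1))
      have t : (∑ k ∈ Finset.range n, (A (j+1) (k+1) : ℤ)) = ∑ k ∈ Finset.range n, (A j (k+1) : ℤ)
          + lam (m + (j+1)) := by exact_mod_cast this
      rw [t]
      omega)
    (by
      intro j hj
      have a1 := hA6 j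
      have a2 := hbeta j hj
      rw [hAs, hle0 (n-j) (by omega)]
      by_cases hjn : j + 1 = n
      · rw [show n - j - 1 = 0 by omega, hle00]
        push_cast
        omega
      · have a3 := hbeta (j+1) (by omega)
        rw [hle0 _ (by omega), show n - j - 1 = n - (j+1) by omega]
        rw [show m + (j + 1 + 1) = m + (j+1) + 1 by omega] at a3
        push_cast
        omega)
  intro j i hj hjn hi hin
  have hcnt : {p : ℕ × ℕ | InShape lam w p ∧ p.1 = m + j ∧ T p = i}.ncard = r (m + j) i := by
    rw [lrs_count lam w (m + j) (fun p => p.1 = m + j ∧ T p = i) (fun p _ h => h.1.le)]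
    rw [Finset.sum_eq_single (m + j)]
    · simp [r]
    · intro b _ hb
      simp [hb]
    · intro h
      simp at h
      omega
  rw [hcnt]
  obtain ⟨q, rfl⟩ : ∃ q, j = q + 1 := ⟨j - 1, by omega⟩
  have hs := hAs q i
  by_cases hi1 : i = 1
  · subst hi1
    have b1 := R1 (q+1) hj hjn
    by_cases hq : q = 0
    · subst hq
      have b2 := hA0 1 le_rfl hn
      have b3 := hta 1 le_rfl hn
      have b4 : ((n : ℤ) - 1) * d = ((n - 1) * d : ℕ) := by push_cast [hn]; ring
      rw [b4] at b1
      simp [muCount] at *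
      omega
    · have b2 := R1 q (by omega) (by omega)
      have : r (m + (q+1)) 1 = 0 := by omega
      rw [this]
      simp [muCount, Nat.pos_of_ne_zero hq]
  · have b1 := R2 (q+1) i hj hjn (by omega) hin
    by_cases hq : q = 0
    · subst hq
      have b2 := hA0 i hi hin
      have b3 := hta i hi hin
      rw [hle0 _ (by omega)] at b1
      have : ¬ i < 0 + 1 := by omega
      simp only [muCount, this, hi1, if_false, if_true, Nat.zero_add] at *
      omega
    · have b2 := R2 q i (by omega) (by omega) (by omega) hin
      by_cases hlt : i < q + 1
      · rw [show i - (q+1) = 0 by omega] at b1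
        rw [show i - q = 0 by omega] at b2
        simp only [muCount, hlt, if_true]
        omega
      · have e : ¬ (q + 1 = 1) := by omega
        simp only [muCount, hlt, e, if_false]
        rw [show i - (q+1) + 1 = i - q by omega]
        omega
end

section
/- Let m ≥ n ≥ 1 and let ã ≥ a ≥ c ≥ d ≥ 0 be integers. Let w be the partition of length m with w_i = ã for 1 ≤ i ≤ n and w_i = a for n < i ≤ m, and let v be the partition of length n with v_1 = c + (n−1)d and v_i = c − d for 2 ≤ i ≤ n. Let λ be a partition of length at most m+n satisfying λ_j + λ_{m+n+1−j} = ã + c for j = 1,…,n and λ_{n+j} = a for j = 1,…,m−n. If the Littlewood–Richardson coefficient c^λ_{w,v} is nonzero, then λ_n ≥ ã and λ_i − λ_{i+1} ≥ d for all i = 1,…,n−1. -/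
theorem lrs_numeric (n : ℕ) (A b t : ℕ → ℕ → ℕ)
    (hA : ∀ r k, 1 ≤ r → A r (k + 1) = A r k + b r (k + 1))
    (hA0 : ∀ r, 1 ≤ r → A r (r - 1) = 0)
    (ht : ∀ r k, 1 ≤ r → t k r = t k (r + 1) + b r k)
    (ht0 : ∀ k, t k (k + 1) = 0)
    (hcol : ∀ r k, 1 ≤ r → A (r + 1) (k + 1) ≤ A r k)
    (htail : ∀ r k, 1 ≤ r → 2 ≤ k → k < n → t k r ≤ t (k + 1) (r + 1))
    (k : ℕ) (hk : 2 ≤ k) (hkn : k ≤ n) : A (n + 2 - k) n ≤ t k 1 := by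
  have Q : ∀ j r, 2 ≤ r → r + j ≤ n → A r (r + j) = t (r + j) r := by
    intro j
    induction j with
    | zero =>
      intro r hr _
      obtain ⟨s, rfl⟩ : ∃ s, r = s + 1 := ⟨r - 1, by omega⟩
      have e1 := hA (s + 1) s (by omega)
      have e2 := hA0 (s + 1) (by omega)
      have e3 := ht (s + 1) (s + 1) (by omega)
      have e4 := ht0 (s + 1)
      simp only [Nat.add_sub_cancel, Nat.add_zero] at *
      omega
    | succ j ih =>
      intro r hr hrn
      have e1 := hA r (r + j) (by omega)
      have e2 := ht r (r + j + 1) (by omega)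
      have e3 := ih r hr (by omega)
      have e4 := ih (r + 1) (by omega) (by omega)
      have e5 := hcol r (r + j) (by omega)
      have e6 := htail r (r + j) (by omega) (by omega) (by omega)
      have e7 : r + 1 + j = r + j + 1 := by omega
      rw [e7] at e4
      rw [← Nat.add_assoc]
      omega
  have C : ∀ j s, 2 + s + j ≤ n → A (2 + s) (2 + s + j) ≤ A 2 (2 + j) := by
    intro j s
    induction s with
    | zero => intro _; simp
    | succ s ih =>
      intro h
      have := ih (by omega)
      have e5 := hcol (2 + s) (2 + s + j) (by omega)
      have e7 : 2 + (s + 1) + j = 2 + s + j + 1 := by omega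
      rw [e7]
      exact e5.trans this
  have h1 := C (k - 2) (n - k) (by omega)
  have h2 := Q (k - 2) 2 le_rfl (by omega)
  have h3 : t k 1 = t k 2 + b 1 k := ht 1 k le_rfl
  have e1 : 2 + (n - k) = n + 2 - k := by omega
  have e2 : 2 + (n - k) + (k - 2) = n := by omega
  have e3 : 2 + (k - 2) = k := by omega
  rw [e2, e1, e3] at h1
  rw [e3] at h2
  omega

open Classical in
theorem lrs_main (m n ta a c d : ℕ) (hn : 1 ≤ n)
    (hmn : n ≤ m) (h1 : a ≤ ta) (h2 : c ≤ a) (h3 : d ≤ c)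
    (w : ℕ → ℕ)
    (hw1 : ∀ i, 1 ≤ i → i ≤ n → w i = ta)
    (hw3 : ∀ i, m < i → w i = 0)
    (v : ℕ → ℕ)
    (hv2 : ∀ i, 2 ≤ i → i ≤ n → v i = c - d)
    (lam : ℕ → ℕ) (hlam : IsPartitionOfLength (m + n) lam)
    (hpair : ∀ j, 1 ≤ j → j ≤ n → lam j + lam (m + n + 1 - j) = ta + c)
    (hsub : ∀ i, w i ≤ lam i) (T : ℕ × ℕ → ℕ) (hT : IsLRTableau lam w v n T)
    (k : ℕ) (hk : 2 ≤ k) (hkn : k ≤ n) : lam k + d ≤ lam (k - 1) := by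
  obtain ⟨hr, -, hrow, hcolT, hwt, hlat⟩ := hT
  obtain ⟨hdec, hzero⟩ := hlam
  have hle1 : ∀ i, lam (i + 1) ≤ lam 1 := by
    intro i
    induction i with
    | zero => exact le_rfl
    | succ i ih => exact (hdec (i + 1) (by omega)).trans ih
  -- the finite shape
  obtain ⟨S, hS⟩ : ∃ S : Finset (ℕ × ℕ), ∀ p, p ∈ S ↔ InShape lam w p := by
    refine ⟨((Finset.Icc 1 (m + n)) ×ˢ (Finset.Icc 1 (lam 1))).filter (InShape lam w), ?_⟩
    rintro ⟨i, j⟩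
    simp only [Finset.mem_filter, Finset.mem_product, Finset.mem_Icc, and_iff_right_iff_imp]
    rintro ⟨p1, p2, p3⟩
    simp only at p1 p2 p3
    have hi : i ≤ m + n := by
      by_contra hc
      have := hzero i (by omega)
      omega
    have := hle1 (i - 1)
    rw [Nat.sub_add_cancel p1] at this
    omega
  -- row monotonicity
  have hrow' : ∀ i j e, InShape lam w (i, j) → InShape lam w (i, j + e) →
      T (i, j) ≤ T (i, j + e) := by
    intro i j e
    induction e with
    | zero => intro _ _; exact le_rfl
    | succ e ih =>
      rintro ⟨q1, q2, q3⟩ ⟨p1, p2, p3⟩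
      simp only at p1 p2 p3 q1 q2 q3
      have hin : InShape lam w (i, j + e) := ⟨p1, by simp only; omega, by simp only; omega⟩
      exact (ih ⟨q1, q2, q3⟩ hin).trans (hrow i (j + e) hin ⟨p1, p2, p3⟩)
  have hrowle : ∀ i j j', j ≤ j' → InShape lam w (i, j) → InShape lam w (i, j') →
      T (i, j) ≤ T (i, j') := by
    intro i j j' hj p q
    obtain ⟨e, rfl⟩ := Nat.exists_eq_add_of_le hj
    exact hrow' i j e p q
  -- top entries
  have htop1 : ∀ i, i ≤ n → ∀ j, InShape lam w (i, j) → i ≤ T (i, j) := by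
    intro i
    induction i with
    | zero => intro _ _ _; omega
    | succ i ih =>
      intro hi j hj
      rcases Nat.eq_zero_or_pos i with h0 | h0
      · subst h0; exact (hr _ hj).1
      · have hin : InShape lam w (i, j) := by
          obtain ⟨p1, p2, p3⟩ := hj
          simp only at p1 p2 p3
          have e1 := hw1 i h0 (by omega)
          have e2 := hw1 (i + 1) p1 hi
          exact ⟨h0, by simp only; omega, p3.trans (hdec i h0)⟩
        have e1 := ih (by omega) j hin
        have e2 := hcolT i j hin hj
        omega
  have htop2 : ∀ i, i ≤ n → ∀ j, InShape lam w (i, j) → T (i, j) ≤ i := by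
    intro i
    induction i using Nat.strong_induction_on with
    | _ i ih =>
      intro hi j hj
      obtain ⟨p1, p2, p3⟩ := id hj
      simp only at p1 p2 p3
      have hlast : InShape lam w (i, lam i) := ⟨p1, by simp only; omega, le_rfl⟩
      refine (hrowle i j (lam i) p3 hj hlast).trans ?_
      by_contra hc
      obtain ⟨q, hq⟩ : ∃ q, T (i, lam i) = q + 1 := ⟨T (i, lam i) - 1, by omega⟩
      have hL := hlat i (lam i) q (by omega)
      have hz : {p | p ∈ ReadingPrefix lam w i (lam i) ∧ T p = q} = ∅ := by
        rw [Set.eq_empty_iff_forall_notMem]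
        rintro ⟨i', j'⟩ ⟨⟨hin, hor⟩, hTq⟩
        simp only at hor
        rcases hor with hlt | ⟨heq, hjj⟩
        · have := ih i' hlt (by omega) j' hin
          omega
        · subst heq
          have : j' = lam i' := le_antisymm hin.2.2 hjj
          subst this
          omega
      rw [hz, Set.ncard_empty, Nat.le_zero, Set.ncard_eq_zero
        (S.finite_toSet.subset fun p hp => (hS p).2 hp.1.1)] at hL
      · have : (i, lam i) ∈ {p | p ∈ ReadingPrefix lam w i (lam i) ∧ T p = q + 1} :=
          ⟨⟨hlast, Or.inr ⟨rfl, le_rfl⟩⟩, hq⟩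
        rw [hL] at this
        exact this
  -- bottom entries
  have hbot : ∀ r j, InShape lam w (m + r + 1, j) → r + 1 ≤ T (m + r + 1, j) := by
    intro r
    induction r with
    | zero => intro j hj; exact (hr _ hj).1
    | succ r ih =>
      intro j hj
      have hin : InShape lam w (m + r + 1, j) := by
        obtain ⟨p1, p2, p3⟩ := hj
        simp only at p1 p2 p3
        have e1 := hw3 (m + r + 1) (by omega)
        exact ⟨by simp only; omega, by simp only; omega, p3.trans (hdec (m + r + 1) (by omega))⟩
      have e1 := ih j hin
      have e2 := hcolT (m + r + 1) j hin hj
      have e3 : m + r + 1 + 1 = m + (r + 1) + 1 := by omega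
      rw [e3] at e2
      omega
  have hrowcard : ∀ i, 1 ≤ i → (S.filter fun p => p.1 = i).card = lam i - w i := by
    intro i hi
    have : (S.filter fun p => p.1 = i) = (Finset.Ioc (w i) (lam i)).image (fun j => (i, j)) := by
      ext ⟨i', j⟩
      simp only [Finset.mem_filter, hS, Finset.mem_image, Finset.mem_Ioc, Prod.mk.injEq, InShape]
      constructor
      · rintro ⟨⟨_, p2, p3⟩, rfl⟩
        exact ⟨j, ⟨p2, p3⟩, rfl, rfl⟩
      · rintro ⟨j, ⟨p2, p3⟩, rfl, rfl⟩
        exact ⟨⟨hi, p2, p3⟩, rfl⟩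
    rw [this, Finset.card_image_of_injective _ (fun x y h => by simpa using h), Nat.card_Ioc]
  have hnc : ∀ (P : ℕ × ℕ → Prop) [DecidablePred P], {p | InShape lam w p ∧ P p}.ncard = (S.filter P).card := by
    intro P _
    rw [← Set.ncard_coe_finset]
    congr 1
    ext p
    simp [hS]
  let A : ℕ → ℕ → ℕ := fun r k => (S.filter fun p => p.1 = m + r ∧ T p ≤ k).card
  let b : ℕ → ℕ → ℕ := fun r k => (S.filter fun p => p.1 = m + r ∧ T p = k).card
  let t : ℕ → ℕ → ℕ := fun k r => (S.filter fun p => m + r ≤ p.1 ∧ T p = k).card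
  have hsplit : ∀ (P Q R : ℕ × ℕ → Prop) [DecidablePred P] [DecidablePred Q]
      [DecidablePred R], (∀ p, P p ↔ Q p ∨ R p) → (∀ p, Q p → ¬ R p) →
      (S.filter P).card = (S.filter Q).card + (S.filter R).card := by
    intro P Q R _ _ _ hP hd
    rw [← Finset.card_union_of_disjoint]
    · congr 1
      ext p
      simp only [Finset.mem_filter, Finset.mem_union, hP]
      tauto
    · rw [Finset.disjoint_filter]
      intro p _ hq
      exact hd p hq
  have key : A (n + 2 - k) n ≤ t k 1 := by
    apply lrs_numeric n A b t _ _ _ _ _ _ k hk hkn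
    · intro r k _
      apply hsplit
      · intro p; omega
      · intro p; omega
    · intro r hr1
      simp only [A, Finset.card_eq_zero]
      rw [Finset.filter_eq_empty_iff]
      rintro ⟨i, j⟩ hp ⟨hi, hle⟩
      simp only at hi
      subst hi
      have := hbot (r - 1) j
      rw [show m + (r - 1) + 1 = m + r by omega] at this
      have := this ((hS _).1 hp)
      omega
    · intro r k _
      apply hsplit
      · intro p; omega
      · intro p; omega
    · intro k
      simp only [t, Finset.card_eq_zero]
      rw [Finset.filter_eq_empty_iff]
      rintro ⟨i, j⟩ hp ⟨hi, hle⟩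
      simp only at hi
      have := hbot (i - m - 1) j
      rw [show m + (i - m - 1) + 1 = i by omega] at this
      have := this ((hS _).1 hp)
      omega
    · intro r k hr1
      apply Finset.card_le_card_of_injOn (fun p => (p.1 - 1, p.2))
      · rintro ⟨i, j⟩ hp
        simp only [Finset.coe_filter, Set.mem_ofPred_eq, hS] at hp ⊢
        obtain ⟨hj, rfl, hle⟩ := hp
        rw [show m + (r + 1) = m + r + 1 by omega] at *
        have hin : InShape lam w (m + r, j) := by
          obtain ⟨p1, p2, p3⟩ := hj
          simp only at p1 p2 p3
          have e1 := hw3 (m + r) (by omega)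
          exact ⟨by simp only; omega, by simp only; omega, p3.trans (hdec (m + r) (by omega))⟩
        have e2 := hcolT (m + r) j hin hj
        exact ⟨hin, rfl, by simp only [Nat.add_sub_cancel]; omega⟩
      · rintro ⟨i, j⟩ hp ⟨i', j'⟩ hp' h
        simp only [Finset.coe_filter, Set.mem_ofPred_eq, Prod.mk.injEq] at hp hp' h ⊢
        omega
    · intro r k hr1 hk2 hkn'
      obtain ⟨j, hj1, hj2⟩ : ∃ j, (∀ j', j ≤ j' → InShape lam w (m + r, j') → k + 1 ≤ T (m + r, j')) ∧
          (∀ j', j' < j → InShape lam w (m + r, j') → T (m + r, j') ≤ k) := by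
        have hex : ∃ j, ∀ j', j ≤ j' → InShape lam w (m + r, j') → k + 1 ≤ T (m + r, j') := by
          refine ⟨lam (m + r) + 1, fun j' h hin => ?_⟩
          have := hin.2.2
          simp only at this
          omega
        refine ⟨Nat.find hex, Nat.find_spec hex, fun j' hj' hin => ?_⟩
        have := Nat.find_min hex hj'
        push Not at this
        obtain ⟨j'', hjj, hin', hlt⟩ := this
        have := hrowle _ _ _ hjj hin hin'
        omega
      have hL := hlat (m + r) j k (by omega)
      have eq1 : {p | p ∈ ReadingPrefix lam w (m + r) j ∧ T p = k + 1}.ncard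
          = (S.filter fun p => p.1 < m + r + 1 ∧ T p = k + 1).card := by
        rw [← hnc]
        congr 1
        ext ⟨i', j'⟩
        simp only [ReadingPrefix, Set.mem_ofPred_eq]
        constructor
        · rintro ⟨⟨hin, hor⟩, hTq⟩
          exact ⟨hin, by omega, hTq⟩
        · rintro ⟨hin, hlt, hTq⟩
          refine ⟨⟨hin, ?_⟩, hTq⟩
          by_contra hc
          have : i' = m + r := by omega
          subst this
          have := hj2 j' (by omega) hin
          omega
      have eq2 : {p | p ∈ ReadingPrefix lam w (m + r) j ∧ T p = k}.ncard
          = (S.filter fun p => p.1 < m + r ∧ T p = k).card := by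
        rw [← hnc]
        congr 1
        ext ⟨i', j'⟩
        simp only [ReadingPrefix, Set.mem_ofPred_eq]
        constructor
        · rintro ⟨⟨hin, hor⟩, hTq⟩
          refine ⟨hin, ?_, hTq⟩
          by_contra hc
          have : i' = m + r := by omega
          subst this
          have := hj1 j' (by omega) hin
          omega
        · rintro ⟨hin, hlt, hTq⟩
          exact ⟨⟨hin, Or.inl hlt⟩, hTq⟩
      rw [eq1, eq2] at hL
      have w1 := hwt k (by omega) (by omega)
      have w2 := hwt (k + 1) (by omega) (by omega)
      rw [hnc, hv2 _ (by omega) (by omega)] at w1 w2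
      have s1 := hsplit (fun p => T p = k) (fun p => p.1 < m + r ∧ T p = k)
        (fun p => m + r ≤ p.1 ∧ T p = k) (by intro p; omega) (by intro p; omega)
      have s2 := hsplit (fun p => T p = k + 1) (fun p => p.1 < m + r + 1 ∧ T p = k + 1)
        (fun p => m + (r + 1) ≤ p.1 ∧ T p = k + 1) (by intro p; omega) (by intro p; omega)
      simp only [t]
      omega
  have hAn : A (n + 2 - k) n = lam (m + (n + 2 - k)) := by
    have e := hrowcard (m + (n + 2 - k)) (by omega)
    rw [hw3 _ (by omega), Nat.sub_zero] at e
    rw [← e]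
    simp only [A]
    congr 1
    apply Finset.filter_congr
    intro p hp
    have := (hr p ((hS p).1 hp)).2
    omega
  have htot : (lam k - ta) + t k 1 ≤ c - d := by
    have w1 := hwt k (by omega) (by omega)
    rw [hnc, hv2 _ (by omega) (by omega)] at w1
    have s1 := hsplit (fun p => T p = k) (fun p => p.1 < m + 1 ∧ T p = k)
        (fun p => m + 1 ≤ p.1 ∧ T p = k) (by intro p; omega) (by intro p; omega)
    have e := hrowcard k (by omega)
    rw [hw1 k (by omega) hkn] at e
    have hle : (S.filter fun p => p.1 = k).card ≤
        (S.filter fun p => p.1 < m + 1 ∧ T p = k).card := by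
      apply Finset.card_le_card
      rintro ⟨i, j⟩ hp
      simp only [Finset.mem_filter] at hp ⊢
      obtain ⟨hp, rfl⟩ := hp
      have hin := (hS _).1 hp
      exact ⟨hp, by omega, le_antisymm (htop2 _ hkn j hin) (htop1 _ hkn j hin)⟩
    simp only [t]
    omega
  have hp := hpair (k - 1) (by omega) (by omega)
  rw [show m + n + 1 - (k - 1) = m + (n + 2 - k) by omega] at hp
  have hs := hsub k
  rw [hw1 k (by omega) hkn] at hs
  omega

/-- Converse direction of Lemma (sl): for `m ≥ n ≥ 1`, `ã ≥ a ≥ c ≥ d ≥ 0`,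
`w = (ã, …, ã, a, …, a)` and `v = (c + (n−1)d, c − d, …, c − d)`, if a
partition `λ` of length at most `m + n` satisfies
`λ_j + λ_{m+n+1−j} = ã + c` for `j = 1, …, n` and `λ_{n+j} = a` for
`j = 1, …, m−n`, and the Littlewood–Richardson coefficient `c^λ_{w,v}` is
nonzero, then `λ_n ≥ ã` and `λ_i − λ_{i+1} ≥ d` for `i = 1, …, n−1`. -/
theorem lr_spherical_nonzero_implies_ineqs (m n ta a c d : ℕ) (hn : 1 ≤ n)
    (hmn : n ≤ m) (h1 : a ≤ ta) (h2 : c ≤ a) (h3 : d ≤ c)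
    (w : ℕ → ℕ)
    (hw1 : ∀ i, 1 ≤ i → i ≤ n → w i = ta)
    (hw2 : ∀ i, n < i → i ≤ m → w i = a)
    (hw3 : ∀ i, m < i → w i = 0)
    (v : ℕ → ℕ)
    (hv1 : v 1 = c + (n - 1) * d)
    (hv2 : ∀ i, 2 ≤ i → i ≤ n → v i = c - d)
    (hv3 : ∀ i, n < i → v i = 0)
    (lam : ℕ → ℕ) (hlam : IsPartitionOfLength (m + n) lam)
    (hpair : ∀ j, 1 ≤ j → j ≤ n → lam j + lam (m + n + 1 - j) = ta + c)
    (hmid : ∀ j, 1 ≤ j → j ≤ m - n → lam (n + j) = a)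
    (hne : LRCoeff lam w v n ≠ 0) :
    ta ≤ lam n ∧ ∀ i, 1 ≤ i → i ≤ n - 1 → lam (i + 1) + d ≤ lam i := by
  unfold LRCoeff at hne
  split_ifs at hne with hsub
  · refine ⟨?_, ?_⟩
    · rw [← hw1 n hn le_rfl]; exact hsub n
    · intro i hi hin
      obtain ⟨T, hT⟩ := Set.nonempty_of_ncard_ne_zero hne
      exact lrs_main m n ta a c d hn hmn h1 h2 h3 w hw1 hw3 v hv2 lam hlam hpair hsub T hT
        (i + 1) (by omega) (by omega)
  · exact absurd rfl hne
end
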